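/- Let G be a finite non-solvable group such that the number i₂(G) of elements of G of order 2 satisfies i₂(G) ≤ |G|/20. Then o(G) ≥ 71/20. -/

import Mathlib

/-- The average element order `o(G) = ψ(G)/|G|` of a finite group `G`,
where `ψ(G) = ∑_{x ∈ G} |x|` is the sum of the orders of all elements of `G`. -/
noncomputable def avgOrder (G : Type*) [Group G] [Fintype G] : ℚ :=
  (∑ x : G, (orderOf x : ℚ)) / (Fintype.card G : ℚ)

/-- `i₂(G)`: the number of elements of order exactly 2 in `G`. -/
noncomputable def numOrderTwo (G : Type*) [Group G] [Fintype G] : ℕ :=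
  (Finset.univ.filter fun g : G => orderOf g = 2).card

namespace AO
variable {G : Type*} [Group G]

/-- cube of `q*y` in terms of conjugates -/
lemma cube_conj (q y : G) (hq : q ^ 3 = 1) :
    (q * y) ^ 3 = (q * y * q⁻¹) * (q ^ 2 * y * (q ^ 2)⁻¹) * y := by
  have : (q ^ 2)⁻¹ = q := by rw [inv_eq_iff_mul_eq_one]; rw [← pow_succ]; exact hq
  rw [this]; simp [pow_succ, mul_assoc]

/-- fourth power of `q*y` in terms of conjugates, rotated -/
lemma four_conj (q y : G) (hq : q ^ 3 = 1) (h : (q * y) ^ 4 = 1) :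
    y * (q * y * q⁻¹) * (q ^ 2 * y * (q ^ 2)⁻¹) * y = q⁻¹ := by
  have e : (q ^ 2)⁻¹ = q := by rw [inv_eq_iff_mul_eq_one]; rw [← pow_succ]; exact hq
  rw [e, ← mul_eq_one_iff_eq_inv]
  have : y * (q * y * q⁻¹) * (q ^ 2 * y * q) * y * q = q⁻¹ * (q * y) ^ 4 * q := by
    simp [pow_succ, mul_assoc]
  rw [this, h]; simp

lemma comm_of_two (a b c : G) (h1 : b * c * a = 1) (h2 : c * b * a = 1) :
    a * b = b * a ∧ c = b⁻¹ * a⁻¹ := by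
  have e1 : b * c = a⁻¹ := mul_eq_one_iff_eq_inv.mp h1
  have e2 : c * b = a⁻¹ := mul_eq_one_iff_eq_inv.mp h2
  have hc : c = b⁻¹ * a⁻¹ := by rw [← e1]; group
  have hc' : c = a⁻¹ * b⁻¹ := by rw [← e2]; group
  refine ⟨?_, hc⟩
  have := hc.symm.trans hc'
  have := congrArg (·⁻¹) this
  simpa using this

/-- two elements `zy`, `z²y` of order 3 on a line through `y`. -/
lemma line_two (z y : G) (hz : z ^ 3 = 1) (h1 : (z * y) ^ 3 = 1)
    (h2 : (z ^ 2 * y) ^ 3 = 1) :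
    Commute y (z * y * z⁻¹) ∧ z ^ 2 * y * (z ^ 2)⁻¹ = (z * y * z⁻¹)⁻¹ * y⁻¹ := by
  have hz2 : (z ^ 2) ^ 3 = 1 := by rw [← pow_mul, mul_comm, pow_mul, hz, one_pow]
  have e4 : z ^ 4 = z := by rw [pow_succ, hz, one_mul]
  rw [cube_conj _ _ hz] at h1
  rw [cube_conj _ _ hz2, ← pow_mul, show 2 * 2 = 4 from rfl, e4] at h2
  exact comm_of_two _ _ _ h1 h2

/-- a full line of elements of order 3 -/
lemma line_full (z y : G) (hz : z ^ 3 = 1) (hy : y ^ 3 = 1) (h1 : (z * y) ^ 3 = 1)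
    (h2 : (z ^ 2 * y) ^ 3 = 1) :
    ∃ p : G, p ^ 3 = 1 ∧ Commute p y ∧ Commute p z ∧ z * y * z⁻¹ = p * y := by
  obtain ⟨k1, k2⟩ := line_two z y hz h1 h2
  set b := z * y * z⁻¹ with hb
  have hb3 : b ^ 3 = 1 := by rw [hb, conj_pow, hy]; group
  have hp3 : (b * y⁻¹) ^ 3 = 1 := by
    rw [(k1.symm.inv_right).mul_pow, inv_pow, hb3, hy]; group
  refine ⟨b * y⁻¹, hp3, ?_, ?_, by group⟩
  · exact (k1.symm).mul_left (Commute.refl y).inv_left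
  · have e : z * (b * y⁻¹) * z⁻¹ = b * y⁻¹ := by
      have c1 : z * b * z⁻¹ = z ^ 2 * y * (z ^ 2)⁻¹ := by
        rw [hb]; simp [pow_two, mul_assoc]
      have : z * (b * y⁻¹) * z⁻¹ = (z * b * z⁻¹) * (z * y * z⁻¹)⁻¹ := by group
      rw [this, c1, k2, ← hb]
      have h5 : b⁻¹ * y⁻¹ * b⁻¹ = (b * y⁻¹) * ((b * y⁻¹) ^ 3)⁻¹ := by
        have hm : Commute b y := k1.symm
        rw [(hm.inv_right).mul_pow]
        have i1 : (b ^ 3 * y⁻¹ ^ 3)⁻¹ = 1 := by rw [hb3, inv_pow, hy]; simp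
        rw [i1, mul_one, hm.inv_inv.eq, mul_assoc, ← mul_inv_rev, ← pow_two]
        have : (b ^ 2)⁻¹ = b := by rw [inv_eq_iff_mul_eq_one]; rw [← pow_succ]; exact hb3
        rw [this, (hm.inv_right).eq]
      rw [h5, hp3]; simp
    exact (mul_inv_eq_iff_eq_mul.mp e).symm

/-- if `g^3` commutes with `z` and `g^20=1` then `g` commutes with `z` -/
lemma comm_of_cube {z g : G} (hg : g ^ 20 = 1) (h : Commute z (g ^ 3)) : Commute z g := by
  have : g = (g ^ 3) ^ 7 := by rw [← pow_mul, show 3 * 7 = 20 + 1 from rfl, pow_succ, hg, one_mul]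
  rw [this]; exact h.pow_right 7

lemma eq_one_of_cube {g : G} (hg : g ^ 20 = 1) (h : g ^ 3 = 1) : g = 1 := by
  have : g = (g ^ 3) ^ 7 := by rw [← pow_mul, show 3 * 7 = 20 + 1 from rfl, pow_succ, hg, one_mul]
  rw [this, h, one_pow]

lemma comm_conj {x z g : G} (hc : Commute x z) (h : Commute z g) : Commute z (x * g * x⁻¹) :=
  ((hc.symm).mul_right h).mul_right hc.symm.inv_right

/-- conjugates by commuting elements -/
lemma conj_swap {x z : G} (hc : Commute x z) (g : G) :
    z * (x * g * x⁻¹) * z⁻¹ = x * (z * g * z⁻¹) * x⁻¹ := by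
  have h : x⁻¹ * z⁻¹ = z⁻¹ * x⁻¹ := hc.inv_inv.eq
  calc z * (x * g * x⁻¹) * z⁻¹ = (z * x) * g * (x⁻¹ * z⁻¹) := by group
    _ = (x * z) * g * (z⁻¹ * x⁻¹) := by rw [h, hc.eq]
    _ = _ := by group

lemma L1_cube (x z y p : G) (hx : x ^ 3 = 1) (hz : z ^ 3 = 1) (hc : Commute x z)
    (hp : p ^ 3 = 1) (hpy : Commute p y) (hpz : Commute p z) (hzy : z * y * z⁻¹ = p * y)
    (h3 : (x * y) ^ 3 = 1) :
    (x * z * y) ^ 3 = x * p⁻¹ * x⁻¹ * p := by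
  have hxz : (x * z) ^ 3 = 1 := by rw [hc.mul_pow, hx, hz, one_mul]
  rw [cube_conj _ _ hxz]
  rw [cube_conj _ _ hx] at h3
  have h4 : (x ^ 2 * y * (x ^ 2)⁻¹) = (x * y * x⁻¹)⁻¹ * y⁻¹ := by
    have := mul_eq_one_iff_eq_inv.mp h3
    rw [← this]; group
  have hz2 : z ^ 2 * y * (z ^ 2)⁻¹ = p ^ 2 * y := by
    have : z ^ 2 * y * (z ^ 2)⁻¹ = z * (z * y * z⁻¹) * z⁻¹ := by simp [pow_two, mul_assoc]
    rw [this, hzy]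
    calc z * (p * y) * z⁻¹ = (z * p) * y * z⁻¹ := by group
      _ = p * (z * y * z⁻¹) := by rw [← hpz.eq]; group
      _ = _ := by rw [hzy]; simp [pow_two, mul_assoc]
  have hc2 := hc.pow_right 2
  have e1 : x * z * y * (x * z)⁻¹ = x * (p * y) * x⁻¹ := by rw [← hzy]; group
  have e2 : (x * z) ^ 2 * y * ((x * z) ^ 2)⁻¹ =
      z ^ 2 * (x ^ 2 * y * (x ^ 2)⁻¹) * (z ^ 2)⁻¹ := by
    rw [hc.mul_pow, (hc.pow_pow 2 2).eq]; group
  have e3 : z ^ 2 * ((x * y * x⁻¹)⁻¹ * y⁻¹) * (z ^ 2)⁻¹ =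
      (x * (p ^ 2 * y) * x⁻¹)⁻¹ * (p ^ 2 * y)⁻¹ := by
    rw [← hz2, ← conj_swap hc2 y]; group
  rw [e1, e2, h4, e3]
  have hp2 : (p ^ 2)⁻¹ = p := by rw [inv_eq_iff_mul_eq_one]; rw [← pow_succ]; exact hp
  have hp1 : p⁻¹ = p ^ 2 := by
    have := congrArg (·⁻¹) hp2
    simpa using this.symm
  have : (p ^ 2 * y)⁻¹ * y = p := by
    rw [(hpy.pow_left 2).eq, mul_inv_rev, mul_assoc, inv_mul_cancel, mul_one, hp2]
  calc _ = x * (p * (p ^ 2)⁻¹) * x⁻¹ * ((p ^ 2 * y)⁻¹ * y) := by group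
    _ = _ := by rw [this, hp2, hp1, ← pow_two]

/-- Full line, plus one element of order 3 and one of order coprime to 3 on a parallel line. -/
lemma L1 (x z y : G) (hx : x ^ 3 = 1) (hz : z ^ 3 = 1) (hc : Commute x z) (hy : y ^ 3 = 1)
    (h1 : (z * y) ^ 3 = 1) (h2 : (z ^ 2 * y) ^ 3 = 1) (h3 : (x * y) ^ 3 = 1)
    (h4 : (x * z * y) ^ 20 = 1) : x * z * y = 1 := by
  obtain ⟨p, hp, hpy, hpz, hzy⟩ := line_full z y hz hy h1 h2
  have e := L1_cube x z y p hx hz hc hp hpy hpz hzy h3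
  have c : Commute z ((x * z * y) ^ 3) := by
    rw [e]; exact (comm_conj hc hpz.symm.inv_right).mul_right hpz.symm
  have c' := comm_of_cube h4 c
  have c2 : Commute z (x * y) := by
    have : x * y = z⁻¹ * (x * z * y) := by rw [hc.eq]; group
    rw [this]; exact (Commute.refl z).inv_right.mul_right c'
  have e3 : (x * z * y) ^ 3 = 1 := by
    rw [hc.eq, mul_assoc, c2.mul_pow, hz, h3, one_mul]
  exact eq_one_of_cube h4 e3

/-- Full line plus two elements of order 3 on a parallel line: `p` is central and third follows. -/
lemma L1b (x z y : G) (hx : x ^ 3 = 1) (hz : z ^ 3 = 1) (hc : Commute x z) (hy : y ^ 3 = 1)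
    (h1 : (z * y) ^ 3 = 1) (h2 : (z ^ 2 * y) ^ 3 = 1) (h3 : (x * y) ^ 3 = 1)
    (h4 : (x * z * y) ^ 3 = 1) :
    ∃ p : G, p ^ 3 = 1 ∧ Commute p y ∧ Commute p z ∧ Commute p x ∧ z * y * z⁻¹ = p * y := by
  obtain ⟨p, hp, hpy, hpz, hzy⟩ := line_full z y hz hy h1 h2
  have e := L1_cube x z y p hx hz hc hp hpy hpz hzy h3
  rw [h4] at e
  refine ⟨p, hp, hpy, hpz, ?_, hzy⟩
  have e1 : x * p * x⁻¹ = p := by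
    have := mul_eq_one_iff_eq_inv.mp e.symm
    have := congrArg (·⁻¹) this
    simpa [mul_assoc] using this
  exact (mul_inv_eq_iff_eq_mul.mp e1).symm

lemma twist_cube (z w p : G) (hz : z ^ 3 = 1) (hp : p ^ 3 = 1) (hpw : Commute p w)
    (hpz : Commute p z) (hzw : z * w * z⁻¹ = p * w) : (z * w) ^ 3 = w ^ 3 ∧ Commute z (w ^ 3) := by
  have e : z * w = p * w * z := by rw [← hzw]; group
  constructor
  · rw [cube_conj _ _ hz]
    have : z ^ 2 * w * (z ^ 2)⁻¹ = z * (z * w * z⁻¹) * z⁻¹ := by simp [pow_two, mul_assoc]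
    rw [this, hzw]
    have : z * (p * w) * z⁻¹ = p * (p * w) := by
      calc z * (p * w) * z⁻¹ = (z * p) * w * z⁻¹ := by group
        _ = p * (z * w * z⁻¹) := by rw [← hpz.eq]; group
        _ = _ := by rw [hzw]
    rw [this]
    calc p * w * (p * (p * w)) * w = p * (w * (p * p)) * w * w := by group
      _ = p ^ 3 * w ^ 3 := by
        rw [← (hpw.mul_left hpw).eq]; simp [pow_succ, mul_assoc]
      _ = _ := by rw [hp, one_mul]
  · have : z * w ^ 3 * z⁻¹ = w ^ 3 := by rw [← conj_pow, hzw, hpw.mul_pow, hp, one_mul]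
    exact mul_inv_eq_iff_eq_mul.mp this

lemma twist_kill (z w p : G) (hz : z ^ 3 = 1) (hp : p ^ 3 = 1) (hpw : Commute p w)
    (hpz : Commute p z) (hzw : z * w * z⁻¹ = p * w) (h1 : w ^ 20 = 1) (h2 : (z * w) ^ 20 = 1) :
    z = 1 := by
  obtain ⟨-, k⟩ := twist_cube z w p hz hp hpw hpz hzw
  have c := comm_of_cube h1 k
  rw [c.mul_pow, h1, mul_one] at h2
  exact eq_one_of_cube h2 hz

/-- Full line and six elements of order dividing four -/
lemma L4_aux (x z y u : G) (hx : x ^ 3 = 1) (hz : z ^ 3 = 1) (hc : Commute x z)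
    (hu : u ^ 3 = 1) (huy : Commute u y) (huz : Commute u z) (hzy : z * y * z⁻¹ = u * y)
    (h1 : (x * y) ^ 4 = 1) (h2 : (x * z * y) ^ 4 = 1) :
    y * (x * u * x⁻¹) * y⁻¹ = z * (u⁻¹ * (x ^ 2 * u * (x ^ 2)⁻¹) * u⁻¹) := by
  have hxz : (x * z) ^ 3 = 1 := by rw [hc.mul_pow, hx, hz, one_mul]
  have f1 := four_conj x y hx h1
  have f2 := four_conj (x * z) y hxz h2
  have hu2 : (u ^ 2)⁻¹ = u := by rw [inv_eq_iff_mul_eq_one]; rw [← pow_succ]; exact hu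
  have hz2 : z ^ 2 * y * (z ^ 2)⁻¹ = u ^ 2 * y := by
    have : z ^ 2 * y * (z ^ 2)⁻¹ = z * (z * y * z⁻¹) * z⁻¹ := by simp [pow_two, mul_assoc]
    rw [this, hzy]
    calc z * (u * y) * z⁻¹ = (z * u) * y * z⁻¹ := by group
      _ = u * (z * y * z⁻¹) := by rw [← huz.eq]; group
      _ = _ := by rw [hzy]; simp [pow_two, mul_assoc]
  have hc2 := hc.pow_pow 2 2
  have e1 : x * z * y * (x * z)⁻¹ = x * (y * u) * x⁻¹ := by rw [← huy.eq, ← hzy]; group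
  have e2 : (x * z) ^ 2 * y * ((x * z) ^ 2)⁻¹ = x ^ 2 * (y * u ^ 2) * (x ^ 2)⁻¹ := by
    rw [← (huy.pow_left 2).eq, ← hz2, hc.mul_pow]; group
  rw [e1, e2] at f2
  set b := x * y * x⁻¹ with hb
  set c := x ^ 2 * y * (x ^ 2)⁻¹ with hc'
  set v := x * u * x⁻¹ with hv
  set w := x ^ 2 * u * (x ^ 2)⁻¹ with hw
  have e3 : x * (y * u) * x⁻¹ = b * v := by rw [hb, hv]; group
  have e4 : x ^ 2 * (y * u ^ 2) * (x ^ 2)⁻¹ = c * w ^ 2 := by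
    rw [hc', hw, conj_pow]; group
  rw [e3, e4] at f2
  -- y b v c w² y = (y b c y) z⁻¹
  have hyz : y * z⁻¹ * y⁻¹ = z⁻¹ * u := by
    have : u * y = z * y * z⁻¹ := hzy.symm
    calc y * z⁻¹ * y⁻¹ = z⁻¹ * (z * y * z⁻¹) * y⁻¹ := by group
      _ = _ := by rw [hzy]; group
  have f3 : v * c * w ^ 2 = c * (z⁻¹ * u) := by
    have : y * (b * v) * (c * w ^ 2) * y = (y * b * c * y) * z⁻¹ := by
      rw [f2, f1, mul_inv_rev, hc.inv_inv.eq]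
    have h5 : b⁻¹ * y⁻¹ * (y * (b * v) * (c * w ^ 2) * y) * y⁻¹ =
      b⁻¹ * y⁻¹ * ((y * b * c * y) * z⁻¹) * y⁻¹ := by rw [this]
    rw [← hyz]
    calc v * c * w ^ 2 = b⁻¹ * y⁻¹ * (y * (b * v) * (c * w ^ 2) * y) * y⁻¹ := by group
      _ = _ := h5
      _ = _ := by group
  -- conjugate by x
  have cz : x * z * x⁻¹ = z := by rw [hc.eq]; group
  have cv : x * v * x⁻¹ = w := by rw [hv, hw]; simp [pow_two, mul_assoc]
  have hx2 : (x ^ 2)⁻¹ = x := by rw [inv_eq_iff_mul_eq_one]; rw [← pow_succ]; exact hx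
  have ccx : x * c * x⁻¹ = y := by
    have : x * c * x⁻¹ = x ^ 3 * y * (x ^ 3)⁻¹ := by rw [hc']; simp [pow_succ, mul_assoc]
    rw [this, hx]; simp
  have cw : x * w * x⁻¹ = u := by
    have : x * w * x⁻¹ = x ^ 3 * u * (x ^ 3)⁻¹ := by rw [hw]; simp [pow_succ, mul_assoc]
    rw [this, hx]; simp
  have cu : x * u * x⁻¹ = v := rfl
  have f4 : w * y * u ^ 2 = y * (z⁻¹ * v) := by
    have : x * (v * c * w ^ 2) * x⁻¹ = x * (c * (z⁻¹ * u)) * x⁻¹ := by rw [f3]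
    have l : x * (v * c * w ^ 2) * x⁻¹ = (x * v * x⁻¹) * (x * c * x⁻¹) * (x * w * x⁻¹) ^ 2 := by
      have : ∀ g : G, (x * g * x⁻¹) ^ 2 = x * g ^ 2 * x⁻¹ := fun g => conj_pow
      rw [this w]; group
    have r : x * (c * (z⁻¹ * u)) * x⁻¹ = (x * c * x⁻¹) * ((x * z * x⁻¹)⁻¹ * (x * u * x⁻¹)) := by
      group
    rw [l, r, cv, ccx, cw, cz, cu] at this
    exact this
  -- w = y z⁻¹ v u y⁻¹
  have f5 : y * v * y⁻¹ = (y * z⁻¹ * y⁻¹)⁻¹ * w * u⁻¹ := by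
    have h6 : y * v = (y * z⁻¹ * y⁻¹)⁻¹ * (w * y * u ^ 2) := by rw [f4]; group
    rw [h6, mul_assoc w, ← (huy.pow_left 2).eq]
    have : u ^ 2 = u⁻¹ := by rw [← hu2, inv_inv, hu2]
    rw [this]; group
  rw [f5, hyz, mul_inv_rev, inv_inv, (huz.inv_left).eq]; group

lemma L4 (x z y : G) (hx : x ^ 3 = 1) (hz : z ^ 3 = 1) (hc : Commute x z) (hy : y ^ 3 = 1)
    (h1 : (z * y) ^ 3 = 1) (h2 : (z ^ 2 * y) ^ 3 = 1) (h3 : (x * y) ^ 4 = 1)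
    (h4 : (x * z * y) ^ 4 = 1) (h5 : (x ^ 2 * y) ^ 4 = 1) (h6 : (x ^ 2 * z * y) ^ 4 = 1) :
    z = 1 := by
  obtain ⟨u, hu, huy, huz, hzy⟩ := line_full z y hz hy h1 h2
  have hx2 : (x ^ 2) ^ 3 = 1 := by rw [← pow_mul, mul_comm, pow_mul, hx, one_pow]
  have e4 : (x ^ 2) ^ 2 = x := by rw [← pow_mul, show 2 * 2 = 3 + 1 from rfl, pow_succ, hx, one_mul]
  have A := L4_aux x z y u hx hz hc hu huy huz hzy h3 h4
  have B := L4_aux (x ^ 2) z y u hx2 hz (hc.pow_left 2) hu huy huz hzy h5 h6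
  rw [e4] at B
  have hcz2 : Commute (x ^ 2) z := hc.pow_left 2
  have zv : Commute z (x * u * x⁻¹) := comm_conj hc huz.symm
  have zw : Commute z (x ^ 2 * u * (x ^ 2)⁻¹) := comm_conj hcz2 huz.symm
  set v := x * u * x⁻¹ with hv
  set w := x ^ 2 * u * (x ^ 2)⁻¹ with hw
  have hyz : y * z * y⁻¹ = u⁻¹ * z := by
    have : y * z * y⁻¹ = u⁻¹ * (u * y) * z * y⁻¹ := by group
    rw [this, ← hzy]; group
  have hyu : y * u⁻¹ * y⁻¹ = u⁻¹ := by rw [← huy.inv_left.eq]; group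
  have zu : Commute z u⁻¹ := huz.symm.inv_right
  have hui : u⁻¹ * u⁻¹ * u⁻¹ = 1 := by
    have : (u ^ 3)⁻¹ = u⁻¹ * u⁻¹ * u⁻¹ := by simp [pow_succ, mul_assoc]
    rw [← this, hu, inv_one]
  have z3 : z * z * z = 1 := by rw [← hz]; simp [pow_succ, mul_assoc]
  -- y^2 v y^-2 = z^2 v u
  have C : y * (y * v * y⁻¹) * y⁻¹ = z * z * v * u := by
    rw [A]
    have : y * (z * (u⁻¹ * w * u⁻¹)) * y⁻¹ =
      (y * z * y⁻¹) * (y * u⁻¹ * y⁻¹) * (y * w * y⁻¹) * (y * u⁻¹ * y⁻¹) := by group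
    rw [this, hyz, hyu, B]
    calc u⁻¹ * z * u⁻¹ * (z * (u⁻¹ * v * u⁻¹)) * u⁻¹
        = u⁻¹ * (z * u⁻¹) * z * u⁻¹ * v * (u⁻¹ * u⁻¹ * u⁻¹) * u := by group
      _ = u⁻¹ * u⁻¹ * (z * z * u⁻¹) * v * u := by rw [hui, zu.eq]; group
      _ = (u⁻¹ * u⁻¹ * u⁻¹) * (z * z * v) * u := by rw [(zu.mul_left zu).eq]; group
      _ = _ := by rw [hui]; group
  have D : v = w := by
    have y3 : y * y * y = 1 := by rw [← hy]; simp [pow_succ, mul_assoc]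
    have y3' : y⁻¹ * y⁻¹ * y⁻¹ = 1 := by
      have : (y ^ 3)⁻¹ = y⁻¹ * y⁻¹ * y⁻¹ := by simp [pow_succ, mul_assoc]
      rw [← this, hy, inv_one]
    have hyu' : y * u * y⁻¹ = u := by rw [← huy.eq]; group
    calc v = (y * y * y) * v * (y⁻¹ * y⁻¹ * y⁻¹) := by rw [y3, y3']; group
      _ = y * (y * (y * v * y⁻¹) * y⁻¹) * y⁻¹ := by group
      _ = (y * z * y⁻¹) * (y * z * y⁻¹) * (y * v * y⁻¹) * (y * u * y⁻¹) := by rw [C]; group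
      _ = u⁻¹ * (z * u⁻¹) * z * (z * (u⁻¹ * w * u⁻¹)) * u := by rw [hyz, hyu', A]; group
      _ = u⁻¹ * u⁻¹ * (z * z * z) * u⁻¹ * w := by rw [zu.eq]; group
      _ = (u⁻¹ * u⁻¹ * u⁻¹) * w := by rw [z3]; group
      _ = w := by rw [hui, one_mul]
  -- u commutes with x
  have hxu : x * u * x⁻¹ = u := by
    have h7 : w = x * v * x⁻¹ := by rw [hv, hw]; simp [pow_two, mul_assoc]
    have : x⁻¹ * v * x = x⁻¹ * w * x := by rw [D]
    rw [h7, hv] at this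
    have h8 : u = x * u * x⁻¹ := by
      calc u = x⁻¹ * (x * u * x⁻¹) * x := by group
        _ = _ := this
        _ = _ := by group
    exact h8.symm
  have hvu : v = u := hxu
  rw [← D, hvu] at A
  have hyu' : y * u * y⁻¹ = u := by rw [← huy.eq]; group
  rw [hyu'] at A
  have zeq : z = u * u := by
    have : z * (u⁻¹ * u * u⁻¹) = z * u⁻¹ := by group
    rw [this] at A
    exact (mul_inv_eq_iff_eq_mul.mp A.symm)
  have cyz : z * y * z⁻¹ = y := by
    have : Commute z y := by rw [zeq]; exact huy.mul_left huy
    rw [this.eq]; group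
  rw [cyz] at hzy
  have : u = 1 := by
    have h9 : u * y = 1 * y := by rw [← hzy, one_mul]
    exact mul_right_cancel h9
  rw [zeq, this, one_mul]


lemma tri (x z t : G) (hx : x ^ 3 = 1) (hz : z ^ 3 = 1) (hc : Commute x z)
    (h : (x * z * t) ^ 3 = 1) :
    (x * (z * t * z⁻¹) * x⁻¹) * (x ^ 2 * (z ^ 2 * t * (z ^ 2)⁻¹) * (x ^ 2)⁻¹) * t = 1 ∧
    (x * (z ^ 2 * t * (z ^ 2)⁻¹) * x⁻¹) * (x ^ 2 * t * (x ^ 2)⁻¹) * (z * t * z⁻¹) = 1 ∧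
    (x * t * x⁻¹) * (x ^ 2 * (z * t * z⁻¹) * (x ^ 2)⁻¹) * (z ^ 2 * t * (z ^ 2)⁻¹) = 1 := by
  have hxz : (x * z) ^ 3 = 1 := by rw [hc.mul_pow, hx, hz, one_mul]
  rw [cube_conj _ _ hxz, hc.mul_pow] at h
  have e1 : (x * (z * t * z⁻¹) * x⁻¹) * (x ^ 2 * (z ^ 2 * t * (z ^ 2)⁻¹) * (x ^ 2)⁻¹) * t = 1 := by
    rw [← h]; simp [mul_assoc]
  have s2 : z * (z ^ 2 * t * (z ^ 2)⁻¹) * z⁻¹ = t := by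
    have : z * (z ^ 2 * t * (z ^ 2)⁻¹) * z⁻¹ = z ^ 3 * t * (z ^ 3)⁻¹ := by
      simp [pow_succ, mul_assoc]
    rw [this, hz]; simp
  have s1 : z * (z * t * z⁻¹) * z⁻¹ = z ^ 2 * t * (z ^ 2)⁻¹ := by simp [pow_two, mul_assoc]
  have key : ∀ a b c : G, (x * a * x⁻¹) * (x ^ 2 * b * (x ^ 2)⁻¹) * c = 1 →
      (x * (z * a * z⁻¹) * x⁻¹) * (x ^ 2 * (z * b * z⁻¹) * (x ^ 2)⁻¹) * (z * c * z⁻¹) = 1 := by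
    intro a b c hh
    rw [← conj_swap hc, ← conj_swap (hc.pow_left 2)]
    calc _ = z * ((x * a * x⁻¹) * (x ^ 2 * b * (x ^ 2)⁻¹) * c) * z⁻¹ := by group
      _ = 1 := by rw [hh]; group
  have e2 := key _ _ _ e1
  rw [s1, s2] at e2
  have e3 := key _ _ _ e2
  rw [s2, s1] at e3
  exact ⟨e1, e2, e3⟩

lemma sq_inv {z : G} (hz : z ^ 3 = 1) : (z ^ 2)⁻¹ = z := by
  rw [inv_eq_iff_mul_eq_one, ← pow_succ]; exact hz

lemma sq_sq {z : G} (hz : z ^ 3 = 1) : (z ^ 2) ^ 2 = z := by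
  rw [← pow_mul, show 2 * 2 = 3 + 1 from rfl, pow_succ, hz, one_mul]

lemma sq_cube {z : G} (hz : z ^ 3 = 1) : (z ^ 2) ^ 3 = 1 := by
  rw [← pow_mul, mul_comm, pow_mul, hz, one_pow]

lemma L5 (x z t : G) (hx : x ^ 3 = 1) (hz : z ^ 3 = 1) (hc : Commute x z)
    (h1 : (z * t) ^ 3 = 1) (h2 : (z ^ 2 * t) ^ 3 = 1) (h3 : (x * z * t) ^ 3 = 1)
    (h4 : (x * z ^ 2 * t) ^ 3 = 1) (h5 : t ^ 20 = 1) (h6 : (x * t) ^ 20 = 1) : x = 1 := by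
  obtain ⟨k1, k2⟩ := line_two z t hz h1 h2
  obtain ⟨a1, -, -⟩ := tri x z t hx hz hc h3
  obtain ⟨-, -, b3⟩ := tri x (z ^ 2) t hx (sq_cube hz) (hc.pow_right 2) h4
  rw [sq_sq hz] at b3
  have s2 : z * (z ^ 2 * t * (z ^ 2)⁻¹) * z⁻¹ = t := by
    have : z * (z ^ 2 * t * (z ^ 2)⁻¹) * z⁻¹ = z ^ 3 * t * (z ^ 3)⁻¹ := by
      simp [pow_succ, mul_assoc]
    rw [this, hz]; simp
  have s1 : z * (z * t * z⁻¹) * z⁻¹ = z ^ 2 * t * (z ^ 2)⁻¹ := by simp [pow_two, mul_assoc]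
  set t1 := z * t * z⁻¹ with ht1
  set t2 := z ^ 2 * t * (z ^ 2)⁻¹ with ht2
  set r2 := x ^ 2 * t2 * (x ^ 2)⁻¹
  have c1 : Commute x (t * t1⁻¹) := by
    have g1 : r2 = (x * t1 * x⁻¹)⁻¹ * t⁻¹ := by
      rw [← mul_eq_one_iff_eq_inv.mp a1]; group
    have g2 : r2 = (x * t * x⁻¹)⁻¹ * t1⁻¹ := by
      rw [← mul_eq_one_iff_eq_inv.mp b3]; group
    have g3 : (x * t1 * x⁻¹)⁻¹ * t⁻¹ = (x * t * x⁻¹)⁻¹ * t1⁻¹ := g1.symm.trans g2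
    have g4 : x * (t * t1⁻¹) * x⁻¹ = t1⁻¹ * t := by
      calc x * (t * t1⁻¹) * x⁻¹ = (x * t * x⁻¹) * ((x * t1 * x⁻¹)⁻¹ * t⁻¹) * t := by group
        _ = _ := by rw [g3]; group
    rw [← k1.inv_right.eq] at g4
    exact mul_inv_eq_iff_eq_mul.mp g4
  have cz : ∀ g, Commute x g → Commute x (z * g * z⁻¹) := fun g hg =>
    (hc.mul_right hg).mul_right hc.inv_right
  have c2 : Commute x (t1 * t2⁻¹) := by
    have := cz _ c1
    have e : z * (t * t1⁻¹) * z⁻¹ = t1 * t2⁻¹ := by rw [← s1, ht1]; group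
    rwa [e] at this
  have c3 : Commute x (t2 * t⁻¹) := by
    have := cz _ c2
    have e : z * (t1 * t2⁻¹) * z⁻¹ = t2 * t⁻¹ := by
      calc z * (t1 * t2⁻¹) * z⁻¹ = (z * t1 * z⁻¹) * (z * t2 * z⁻¹)⁻¹ := by group
        _ = _ := by rw [s1, s2]
    rwa [e] at this
  -- t^3 = (t t1⁻¹)(t2 t⁻¹)⁻¹ since t0 t1 t2 = 1
  have c4 : Commute x (t ^ 3) := by
    have e : t ^ 3 = (t * t1⁻¹) * (t2 * t⁻¹)⁻¹ := by
      rw [k2]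
      have e2 : (t * t1⁻¹) * (t1⁻¹ * t⁻¹ * t⁻¹)⁻¹ = t * (t1⁻¹ * (t * t)) * t1 := by simp [mul_assoc]
      rw [e2, ← ((k1.mul_left k1).inv_right).eq]; simp [pow_succ, mul_assoc]
    rw [e]; exact c1.mul_right c3.inv_right
  have c5 := comm_of_cube h5 c4
  rw [c5.mul_pow, h5, mul_one] at h6
  exact eq_one_of_cube h6 hx

lemma L6 (x z t : G) (hx : x ^ 3 = 1) (hz : z ^ 3 = 1) (hc : Commute x z)
    (h1 : (z * t) ^ 3 = 1) (h2 : (z ^ 2 * t) ^ 3 = 1) (h3 : (x * z * t) ^ 3 = 1)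
    (h4 : (x * z ^ 2 * t) ^ 4 = 1) (h5 : t ^ 4 = 1) (h6 : (x * t) ^ 4 = 1) : z = 1 := by
  obtain ⟨k1, k2⟩ := line_two z t hz h1 h2
  obtain ⟨-, a2, a3⟩ := tri x z t hx hz hc h3
  have f0 := four_conj x t hx h6
  have hq : (x * z ^ 2) ^ 3 = 1 := by
    rw [(hc.pow_right 2).mul_pow, hx, sq_cube hz, one_mul]
  have f1 := four_conj (x * z ^ 2) t hq h4
  have e1 : x * z ^ 2 * t * (x * z ^ 2)⁻¹ = x * (z ^ 2 * t * (z ^ 2)⁻¹) * x⁻¹ := by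
    simp [mul_assoc]
  have e2 : (x * z ^ 2) ^ 2 * t * ((x * z ^ 2) ^ 2)⁻¹ = x ^ 2 * (z * t * z⁻¹) * (x ^ 2)⁻¹ := by
    rw [(hc.pow_right 2).mul_pow, sq_sq hz]; simp [mul_assoc]
  rw [e1, e2, mul_inv_rev] at f1
  have s2 : z * (z ^ 2 * t * (z ^ 2)⁻¹) * z⁻¹ = t := by
    have : z * (z ^ 2 * t * (z ^ 2)⁻¹) * z⁻¹ = z ^ 3 * t * (z ^ 3)⁻¹ := by
      simp [pow_succ, mul_assoc]
    rw [this, hz]; simp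
  have s1 : z * (z * t * z⁻¹) * z⁻¹ = z ^ 2 * t * (z ^ 2)⁻¹ := by simp [pow_two, mul_assoc]
  set t1 := z * t * z⁻¹ with ht1
  set t2 := z ^ 2 * t * (z ^ 2)⁻¹ with ht2
  set r0 := x ^ 2 * t * (x ^ 2)⁻¹
  set r1 := x ^ 2 * t1 * (x ^ 2)⁻¹
  set s0' := x * t * x⁻¹ with hs0
  set s2' := x * t2 * x⁻¹ with hs2
  have k02 : Commute t t2 := by
    rw [k2]; exact k1.inv_right.mul_right (Commute.refl t).inv_right
  have k12 : Commute t1 t2 := by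
    rw [k2]; exact (Commute.refl t1).inv_right.mul_right k1.symm.inv_right
  have g0 : r0 = s2'⁻¹ * t1⁻¹ := by rw [← mul_eq_one_iff_eq_inv.mp a2]; group
  have g1 : r1 = s0'⁻¹ * t2⁻¹ := by rw [← mul_eq_one_iff_eq_inv.mp a3]; group
  have t14 : t1 ^ 4 = 1 := by rw [ht1, conj_pow, h5]; group
  have t24 : t2 ^ 4 = 1 := by rw [ht2, conj_pow, h5]; group
  have inv2 : ∀ g : G, g ^ 4 = 1 → (g ^ 2)⁻¹ = g ^ 2 := by
    intro g hg
    rw [inv_eq_iff_mul_eq_one, ← pow_add]; exact hg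
  have kk : t ^ 2 * t2 ^ 2 = t1 ^ 2 := by
    have : t1⁻¹ = t * t2 := by rw [k2]; rw [k1.inv_inv.symm.eq]; group
    rw [← k02.mul_pow, ← this, inv_pow, inv2 _ t14]
  have kk2 : t1 ^ 2 * t ^ 2 = t2 ^ 2 := by
    rw [← kk, ← (k02.pow_pow 2 2).eq.symm, mul_assoc, ← pow_add, show 2+2=4 from rfl, h5, mul_one]
  have hz1 : z = t⁻¹ * t1 * (s2' * s2' * (s0'⁻¹ * s0'⁻¹)) * t2⁻¹ * t := by
    have hzz : z = (t * s0' * r0 * t)⁻¹ * (t * s2' * r1 * t) := by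
      rw [f0, f1, sq_inv hz, ← hc.symm.inv_right.eq.symm, ← hc.symm.inv_right.eq]
      rw [hc.symm.inv_right.eq]; simp
    have ks : Commute s2' s0' := by
      have : x * (t2 * t) * x⁻¹ = x * (t * t2) * x⁻¹ := by rw [k02.eq]
      calc s2' * s0' = x * (t2 * t) * x⁻¹ := by rw [hs2, hs0]; group
        _ = _ := this
        _ = _ := by rw [hs2, hs0]; group
    have e5 : (t * s0' * r0 * t)⁻¹ * (t * s2' * r1 * t) =
        t⁻¹ * t1 * (s2' * (s0'⁻¹ * s2') * s0'⁻¹) * t2⁻¹ * t := by rw [g0, g1]; group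
    rw [hzz, e5, ← (ks.inv_right).eq]; group
  have ss : s2' * s2' * (s0'⁻¹ * s0'⁻¹) = x * t1 ^ 2 * x⁻¹ := by
    have : s2' * s2' * (s0'⁻¹ * s0'⁻¹) = x * (t2 ^ 2 * (t ^ 2)⁻¹) * x⁻¹ := by
      rw [hs2, hs0]; simp [pow_two, mul_assoc]
    rw [this, inv2 _ h5, ← (k02.pow_pow 2 2).eq, kk]
  rw [ss] at hz1
  set σ := x * t1 ^ 2 * x⁻¹ with hσ
  have σ2 : σ * σ = 1 := by
    rw [← pow_two, hσ, conj_pow, ← pow_mul, t14]; group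
  have A : z * t2 * z⁻¹ = t := s2
  have B : σ = t2 ^ 2 * z := by
    -- conjugate
    have u1 : σ = t1⁻¹ * t * z * t⁻¹ * t2 := by
      calc σ = t1⁻¹ * t * (t⁻¹ * t1 * σ * t2⁻¹ * t) * t⁻¹ * t2 := by group
        _ = _ := by rw [← hz1]
    have u2 : z * t⁻¹ * t2 = t1⁻¹ * t * z := by
      calc z * t⁻¹ * t2 = (z * t * z⁻¹)⁻¹ * (z * t2 * z⁻¹) * z := by group
        _ = _ := by rw [← ht1, s2]
    have u3 : σ = t1⁻¹ * t * (t1⁻¹ * t) * z := by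
      rw [u1]
      calc t1⁻¹ * t * z * t⁻¹ * t2 = t1⁻¹ * t * (z * t⁻¹ * t2) := by group
        _ = _ := by rw [u2]; group
    rw [u3]
    have u4 : t1⁻¹ * t * (t1⁻¹ * t) = (t1 ^ 2)⁻¹ * t ^ 2 := by
      rw [← k1.inv_right.eq, ← pow_two, k1.inv_right.mul_pow,
        (k1.inv_right.pow_pow 2 2).eq, inv_pow]
    rw [u4, inv2 _ t14, kk2]
  have C : t1 ^ 2 * z ^ 2 = 1 := by
    rw [B] at σ2
    rw [← σ2, ← kk, ← (k02.pow_pow 2 2).eq.symm]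
    have : z * t2 ^ 2 = t ^ 2 * z := by
      have := conj_pow (i := 2) (a := z) (b := t2)
      rw [s2] at this
      rw [this]; group
    calc t2 ^ 2 * t ^ 2 * z ^ 2 = t2 ^ 2 * (t ^ 2 * z) * z := by simp [pow_two, mul_assoc]
      _ = _ := by rw [← this]; group
  have D : z = t1 ^ 2 := by
    rw [mul_eq_one_iff_eq_inv, sq_inv hz] at C; exact C.symm
  have E : z ^ 2 = 1 := by rw [D, ← pow_mul]; exact t14
  have : z ^ 3 = z := by rw [pow_succ, E, one_mul]
  rw [← this, hz]

end AO

namespace AO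
variable {G : Type*} [Group G]

lemma L1c (x z y : G) (hx : x ^ 3 = 1) (hz : z ^ 3 = 1) (hc : Commute x z) (hy : y ^ 3 = 1)
    (h1 : (z * y) ^ 3 = 1) (h2 : (z ^ 2 * y) ^ 3 = 1) (h3 : (x * y) ^ 3 = 1)
    (h4 : (x * z * y) ^ 3 = 1) : (x * z ^ 2 * y) ^ 3 = 1 := by
  obtain ⟨p, hp, hpy, hpz, hpx, hzy⟩ := L1b x z y hx hz hc hy h1 h2 h3 h4
  have hzw : z * (x * y) * z⁻¹ = p * (x * y) := by
    calc z * (x * y) * z⁻¹ = (z * x) * y * z⁻¹ := by group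
      _ = x * (z * y * z⁻¹) := by rw [← hc.eq]; group
      _ = _ := by rw [hzy, ← mul_assoc, ← hpx.eq, mul_assoc]
  have hzw2 : z ^ 2 * (x * y) * (z ^ 2)⁻¹ = p ^ 2 * (x * y) := by
    have : z ^ 2 * (x * y) * (z ^ 2)⁻¹ = z * (z * (x * y) * z⁻¹) * z⁻¹ := by
      simp [pow_two, mul_assoc]
    rw [this, hzw]
    calc z * (p * (x * y)) * z⁻¹ = (z * p) * (x * y) * z⁻¹ := by group
      _ = p * (z * (x * y) * z⁻¹) := by rw [← hpz.eq]; group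
      _ = _ := by rw [hzw]; simp [pow_two, mul_assoc]
  have := (twist_cube (z ^ 2) (x * y) (p ^ 2) (sq_cube hz) (sq_cube hp)
    ((hpx.mul_right hpy).pow_left 2) (hpz.pow_pow 2 2) hzw2).1
  rw [h3, ← mul_assoc, ← (hc.pow_right 2).eq] at this
  exact this

/-- the data on a third line, when two parallel lines are full -/
lemma third (x z y : G) (hx : x ^ 3 = 1) (hz : z ^ 3 = 1) (hc : Commute x z) (hy : y ^ 3 = 1)
    (h1 : (z * y) ^ 3 = 1) (h2 : (z ^ 2 * y) ^ 3 = 1) (h3 : (x * y) ^ 3 = 1)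
    (h4 : (x * z * y) ^ 3 = 1) (u : G) (hu : u = x ^ 2 ∨ u = x ^ 2 * z ∨ u = x ^ 2 * z ^ 2)
    (d : G) (hd : d = z ∨ d = z ^ 2) :
    (u * d * y) ^ 3 = (u * y) ^ 3 ∧ ((u * y) ^ 20 = 1 → (u * d * y) ^ 20 = 1 → d = 1) := by
  obtain ⟨p, hp, hpy, hpz, hpx, hzy⟩ := L1b x z y hx hz hc hy h1 h2 h3 h4
  have hpu : Commute p u := by
    rcases hu with rfl | rfl | rfl
    · exact hpx.pow_right 2
    · exact (hpx.pow_right 2).mul_right hpz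
    · exact (hpx.pow_right 2).mul_right (hpz.pow_right 2)
  have huz : Commute u z := by
    rcases hu with rfl | rfl | rfl
    · exact hc.pow_left 2
    · exact (hc.pow_left 2).mul_left (Commute.refl z)
    · exact (hc.pow_left 2).mul_left ((Commute.refl z).pow_left 2)
  have hzw : z * (u * y) * z⁻¹ = p * (u * y) := by
    calc z * (u * y) * z⁻¹ = (z * u) * y * z⁻¹ := by group
      _ = u * (z * y * z⁻¹) := by rw [← huz.eq]; group
      _ = _ := by rw [hzy, ← mul_assoc, ← hpu.eq, mul_assoc]
  have hzw2 : z ^ 2 * (u * y) * (z ^ 2)⁻¹ = p ^ 2 * (u * y) := by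
    have : z ^ 2 * (u * y) * (z ^ 2)⁻¹ = z * (z * (u * y) * z⁻¹) * z⁻¹ := by
      simp [pow_two, mul_assoc]
    rw [this, hzw]
    calc z * (p * (u * y)) * z⁻¹ = (z * p) * (u * y) * z⁻¹ := by group
      _ = p * (z * (u * y) * z⁻¹) := by rw [← hpz.eq]; group
      _ = _ := by rw [hzw]; simp [pow_two, mul_assoc]
  rcases hd with rfl | rfl
  · rw [huz.eq, mul_assoc]
    exact ⟨(twist_cube d (u * y) p hz hp (hpu.mul_right hpy) hpz hzw).1,
      fun a b => twist_kill d (u * y) p hz hp (hpu.mul_right hpy) hpz hzw a b⟩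
  · rw [(huz.pow_right 2).eq, mul_assoc]
    have a1 := (hpu.mul_right hpy).pow_left 2
    have a2 := hpz.pow_pow 2 2
    exact ⟨(twist_cube (z ^ 2) (u * y) (p ^ 2) (sq_cube hz) (sq_cube hp) a1 a2 hzw2).1,
      fun a b => twist_kill (z ^ 2) (u * y) (p ^ 2) (sq_cube hz) (sq_cube hp) a1 a2 hzw2 a b⟩

lemma L3 (E : Subgroup G) (hexp : ∀ a ∈ E, a ^ 3 = 1) (y : G)
    (h : ∀ e ∈ E, (e * y) ^ 3 = 1) : ∃ Q : Subgroup G, IsPGroup 3 Q ∧ E ≤ Q ∧ y ∈ Q := by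
  set S : Set G := {g | ∃ e ∈ E, g = e * y * e⁻¹} with hS
  have hy : y ^ 3 = 1 := by simpa using h 1 E.one_mem
  have c1 : ∀ e ∈ E, Commute y (e * y * e⁻¹) := fun e he =>
    (line_two e y (hexp e he) (h e he) (h _ (E.pow_mem he 2))).1
  have c2 : ∀ a ∈ S, ∀ b ∈ S, a * b = b * a := by
    rintro _ ⟨e, he, rfl⟩ _ ⟨f, hf, rfl⟩
    have := c1 _ (E.mul_mem (E.inv_mem he) hf)
    have k : e * (y * (e⁻¹ * f * y * (e⁻¹ * f)⁻¹)) * e⁻¹ =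
      e * ((e⁻¹ * f * y * (e⁻¹ * f)⁻¹) * y) * e⁻¹ := by rw [this.eq]
    calc _ = e * (y * (e⁻¹ * f * y * (e⁻¹ * f)⁻¹)) * e⁻¹ := by group
      _ = _ := k
      _ = _ := by group
  have c3 : ∀ a ∈ Subgroup.closure S, ∀ b ∈ Subgroup.closure S, Commute a b := by
    intro a ha b hb
    have hm := Subgroup.isMulCommutative_closure c2
    have := hm.is_comm.comm (⟨a, ha⟩ : Subgroup.closure S) ⟨b, hb⟩
    exact congrArg Subtype.val this
  have c4 : ∀ a ∈ Subgroup.closure S, a ^ 3 = 1 := by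
    intro a ha
    induction ha using Subgroup.closure_induction with
    | mem g hg => obtain ⟨e, he, rfl⟩ := hg; rw [conj_pow, hy]; group
    | one => simp
    | mul a b ha hb ia ib => rw [(c3 a ha b hb).mul_pow, ia, ib, one_mul]
    | inv a ha ia => rw [inv_pow, ia, inv_one]
  have hpE : IsPGroup 3 E := fun g => ⟨1, by ext; simpa using hexp g g.2⟩
  have hpN : IsPGroup 3 (Subgroup.closure S) := fun g => ⟨1, by ext; simpa using c4 g g.2⟩
  have hn : E ≤ Subgroup.normalizer (Subgroup.closure S : Set G) := by
    rw [Subgroup.le_normalizer_closure_iff]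
    rintro e he _ ⟨f, hf, rfl⟩
    exact Subgroup.subset_closure ⟨e * f, E.mul_mem he hf, by group⟩
  refine ⟨E ⊔ Subgroup.closure S, hpE.to_sup_of_normal_right' hpN hn, le_sup_left, ?_⟩
  apply (le_sup_right : _ ≤ E ⊔ Subgroup.closure S)
  exact Subgroup.subset_closure ⟨1, E.one_mem, by simp⟩

end AO

namespace AO
variable {G : Type*} [Group G]

/-- the weight of an element -/
noncomputable def wt (g : G) : ℤ :=
  if orderOf g = 1 then 3 else if orderOf g = 2 then 0 else if orderOf g = 4 then 0 else
  if orderOf g = 3 then 1 else if orderOf g = 5 then -1 else -2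

lemma wt_le {g : G} (hg : g ≠ 1) : wt g ≤ 1 := by
  have : orderOf g ≠ 1 := by rwa [ne_eq, orderOf_eq_one_iff]
  unfold wt; split_ifs <;> simp_all

lemma wt_ge (g : G) : -2 ≤ wt g := by
  unfold wt; split_ifs <;> simp_all

lemma wt_cube {g : G} (h : wt g = 1) : g ^ 3 = 1 := by
  unfold wt at h
  have : orderOf g = 3 := by split_ifs at h <;> simp_all
  rw [← this]; exact pow_orderOf_eq_one g

lemma wt_of_cube {g : G} (h : g ^ 3 = 1) (hg : g ≠ 1) : wt g = 1 := by
  have : orderOf g = 3 := orderOf_eq_prime h hg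
  unfold wt; simp [this]

lemma wt_four {g : G} (h : wt g = 0) : g ^ 4 = 1 := by
  unfold wt at h
  have : orderOf g = 2 ∨ orderOf g = 4 := by split_ifs at h <;> simp_all
  apply orderOf_dvd_iff_pow_eq_one.mp
  rcases this with h | h <;> rw [h]; norm_num

lemma wt_twenty {g : G} (h : wt g = 0 ∨ wt g = -1) : g ^ 20 = 1 := by
  unfold wt at h
  have : orderOf g = 2 ∨ orderOf g = 4 ∨ orderOf g = 5 := by split_ifs at h <;> simp_all
  apply orderOf_dvd_iff_pow_eq_one.mp
  rcases this with h | h | h <;> rw [h] <;> norm_num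

/-- elementary abelian subgroup of order nine -/
structure Nine (E : Subgroup G) : Prop where
  comm : ∀ a ∈ E, ∀ b ∈ E, Commute a b
  exp : ∀ a ∈ E, a ^ 3 = 1
  card : Nat.card E = 9

lemma nine_bij {E : Subgroup G} (hE : Nine E) {x z : G} (hx : x ∈ E) (hz : z ∈ E) (hz1 : z ≠ 1)
    (hxz : x ∉ Subgroup.zpowers z) :
    Function.Bijective (fun p : Fin 3 × Fin 3 => (⟨x ^ p.1.val * z ^ p.2.val,
      E.mul_mem (E.pow_mem hx _) (E.pow_mem hz _)⟩ : E)) := by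
  have fin : Finite E := Nat.finite_of_card_ne_zero (by rw [hE.card]; norm_num)
  have := Fintype.ofFinite E
  rw [Fintype.bijective_iff_injective_and_card]
  constructor
  · have hoz : orderOf z = 3 := orderOf_eq_prime (hE.exp z hz) hz1
    have key : ∀ i k : Fin 3, x ^ i.val * (x ^ k.val)⁻¹ ∈ Subgroup.zpowers z → i = k := by
      have n1 : x ^ 2 ∉ Subgroup.zpowers z := by
        intro h
        apply hxz
        have := (Subgroup.zpowers z).pow_mem h 2
        rwa [sq_sq (hE.exp x hx)] at this
      have e1 : x * (x ^ 2)⁻¹ = x ^ 2 := by rw [sq_inv (hE.exp x hx), pow_two]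
      have e2 : x ^ 2 * x⁻¹ = x := by simp [pow_two]
      intro i k h
      fin_cases i <;> fin_cases k <;> simp_all
    rintro ⟨i, j⟩ ⟨k, l⟩ h
    simp only [Subtype.mk.injEq] at h
    have hik : i = k := by
      apply key
      have : x ^ i.val * (x ^ k.val)⁻¹ = z ^ l.val * (z ^ j.val)⁻¹ := by
        have hc := (hE.comm x hx z hz).pow_pow k.val l.val
        rw [hc.eq] at h
        have : x ^ i.val = z ^ l.val * x ^ k.val * (z ^ j.val)⁻¹ := by rw [← h]; group
        rw [this, mul_assoc, mul_assoc, ((hE.comm x hx z hz).pow_pow k.val j.val).symm.inv_inv.eq]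
        group
      rw [this]
      exact (Subgroup.zpowers z).mul_mem ((Subgroup.zpowers z).pow_mem (Subgroup.mem_zpowers z) _)
        ((Subgroup.zpowers z).inv_mem ((Subgroup.zpowers z).pow_mem (Subgroup.mem_zpowers z) _))
    subst hik
    have hjl : z ^ j.val = z ^ l.val := mul_left_cancel h
    have := pow_injOn_Iio_orderOf (x := z) (by rw [hoz]; exact j.2) (by rw [hoz]; exact l.2) hjl
    exact Prod.ext rfl (Fin.ext this)
  · rw [← Nat.card_eq_fintype_card, ← Nat.card_eq_fintype_card, hE.card]; simp

lemma nine_sum [Fintype G] {E : Subgroup G} [Fintype E] (hE : Nine E) {x z : G} (hx : x ∈ E) (hz : z ∈ E) (hz1 : z ≠ 1)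
    (hxz : x ∉ Subgroup.zpowers z) (f : G → ℤ) :
    ∑ e : E, f e = f 1 + f z + f (z ^ 2) + f x + f (x * z) + f (x * z ^ 2) + f (x ^ 2) +
      f (x ^ 2 * z) + f (x ^ 2 * z ^ 2) := by
  rw [← Equiv.sum_comp (Equiv.ofBijective _ (nine_bij hE hx hz hz1 hxz)), Fintype.sum_prod_type]
  simp [Fin.sum_univ_three]
  ring

lemma nine_all {E : Subgroup G} (hE : Nine E) {x z : G} (hx : x ∈ E) (hz : z ∈ E) (hz1 : z ≠ 1)
    (hxz : x ∉ Subgroup.zpowers z) (p : G → Prop) (h1 : p 1) (h2 : p z) (h3 : p (z ^ 2))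
    (h4 : p x) (h5 : p (x * z)) (h6 : p (x * z ^ 2)) (h7 : p (x ^ 2)) (h8 : p (x ^ 2 * z))
    (h9 : p (x ^ 2 * z ^ 2)) : ∀ e ∈ E, p e := by
  intro e he
  obtain ⟨⟨i, j⟩, h⟩ := (nine_bij hE hx hz hz1 hxz).2 ⟨e, he⟩
  have : e = x ^ i.val * z ^ j.val := (congrArg Subtype.val h).symm
  rw [this]
  fin_cases i <;> fin_cases j <;> simpa
end AO

namespace AO
variable {G : Type*} [Group G]

/-- line parallel to a full line -/
lemma lineA {E : Subgroup G} (hE : Nine E) {x z y : G} (hx : x ∈ E) (hz : z ∈ E) (hy : y ∉ E)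
    (a0 : y ^ 3 = 1) (a1 : (z * y) ^ 3 = 1) (a2 : (z ^ 2 * y) ^ 3 = 1) :
    (wt (x * y) = 1 ∧ wt (x * z * y) = 1 ∧ wt (x * z ^ 2 * y) = 1) ∨
    wt (x * y) + wt (x * z * y) + wt (x * z ^ 2 * y) ≤ -3 ∨
    (wt (x * y) ≤ 0 ∧ wt (x * z * y) ≤ 0 ∧ wt (x * z ^ 2 * y) ≤ 0) := by
  have ne : ∀ u ∈ E, u * y ≠ 1 := fun u hu h => hy (by
    rw [← mul_eq_one_iff_inv_eq.mp h]; exact E.inv_mem hu)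
  have hz3 := hE.exp z hz
  have L : ∀ u ∈ E, ∀ d, d = z ∨ d = z ^ 2 → wt (u * y) = 1 → ¬ (wt (u * d * y) = 0 ∨ wt (u * d * y) = -1) := by
    intro u hu d hd h1 h2
    rcases hd with rfl | rfl
    · exact ne _ (E.mul_mem hu hz) (L1 u d y (hE.exp u hu) hz3 (hE.comm u hu d hz) a0 a1 a2
        (wt_cube h1) (wt_twenty h2))
    · exact ne _ (E.mul_mem hu (E.pow_mem hz 2)) (L1 u (z ^ 2) y (hE.exp u hu) (sq_cube hz3)
        (hE.comm u hu _ (E.pow_mem hz 2)) a0 a2 (by rwa [sq_sq hz3])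
        (wt_cube h1) (wt_twenty h2))
  have M : ∀ u ∈ E, wt (u * y) = 1 → wt (u * z * y) = 1 → wt (u * z ^ 2 * y) = 1 := by
    intro u hu h1 h2
    exact wt_of_cube (L1c u z y (hE.exp u hu) hz3 (hE.comm u hu z hz) a0 a1 a2
        (wt_cube h1) (wt_cube h2)) (ne _ (E.mul_mem hu (E.pow_mem hz 2)))
  have e1 : x * z * z = x * z ^ 2 := by rw [mul_assoc, pow_two]
  have e2 : x * z * z ^ 2 = x := by rw [mul_assoc, ← pow_succ', hz3, mul_one]
  have e3 : x * z ^ 2 * z = x := by rw [mul_assoc, ← pow_succ, hz3, mul_one]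
  have e4 : x * z ^ 2 * z ^ 2 = x * z := by rw [mul_assoc, ← pow_two, sq_sq hz3]
  have m1 := E.mul_mem hx hz
  have m2 := E.mul_mem hx (E.pow_mem hz 2)
  have l1 := L x hx z (.inl rfl)
  have l2 := L x hx (z ^ 2) (.inr rfl)
  have l3 := L _ m1 z (.inl rfl)
  have l4 := L _ m1 (z ^ 2) (.inr rfl)
  have l5 := L _ m2 z (.inl rfl)
  have l6 := L _ m2 (z ^ 2) (.inr rfl)
  have n1 := M x hx
  have n2 := M _ m1
  have n3 := M _ m2
  rw [e1] at l3 n2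
  rw [e2] at l4 n2
  rw [e3] at l5 n3
  rw [e4] at l6 n3
  have b1 := wt_le (ne _ hx)
  have b2 := wt_le (ne _ m1)
  have b3 := wt_le (ne _ m2)
  omega

/-- two parallel full lines -/
lemma twofull [Fintype G] {E : Subgroup G} [Fintype E] (hE : Nine E) {x z y : G} (hx : x ∈ E)
    (hz : z ∈ E) (hz1 : z ≠ 1) (hxz : x ∉ Subgroup.zpowers z) (hy : y ∉ E)
    (hS : 3 ≤ ∑ e : E, wt ((e : G) * y))
    (a0 : wt y = 1) (a1 : wt (z * y) = 1) (a2 : wt (z ^ 2 * y) = 1)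
    (a3 : wt (x * y) = 1) (a4 : wt (x * z * y) = 1) (a5 : wt (x * z ^ 2 * y) = 1) :
    ∃ Q : Subgroup G, IsPGroup 3 Q ∧ E ≤ Q ∧ y ∈ Q := by
  have ne : ∀ u ∈ E, u * y ≠ 1 := fun u hu h => hy (by
    rw [← mul_eq_one_iff_inv_eq.mp h]; exact E.inv_mem hu)
  have hz3 := hE.exp z hz
  have hx3 := hE.exp x hx
  rw [nine_sum hE hx hz hz1 hxz (fun e => wt (e * y)), one_mul, a0, a1, a2, a3, a4, a5] at hS
  have T := third x z y hx3 hz3 (hE.comm x hx z hz) (wt_cube a0) (wt_cube a1) (wt_cube a2)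
    (wt_cube a3) (wt_cube a4)
  have e1 : x ^ 2 * z * z = x ^ 2 * z ^ 2 := by rw [mul_assoc, ← pow_two]
  have e2 : x ^ 2 * z * z ^ 2 = x ^ 2 := by rw [mul_assoc, ← pow_succ', hz3, mul_one]
  have m0 := E.pow_mem hx 2
  have m1 := E.mul_mem m0 hz
  have m2 := E.mul_mem m0 (E.pow_mem hz 2)
  have t1 := T (x ^ 2) (by simp) z (by simp)
  have t2 := T (x ^ 2) (by simp) (z ^ 2) (by simp)
  have t3 := T (x ^ 2 * z) (by simp) z (by simp)
  rw [e1] at t3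
  have z2 : z ^ 2 ≠ 1 := fun h => hz1 (by rw [← sq_sq hz3, h, one_pow])
  have b1 := wt_le (ne _ m0)
  have b2 := wt_le (ne _ m1)
  have b3 := wt_le (ne _ m2)
  by_cases hA : (x ^ 2 * y) ^ 3 = 1
  · apply L3 E hE.exp
    refine nine_all hE hx hz hz1 hxz _ ?_ (wt_cube a1) (wt_cube a2) (wt_cube a3) (wt_cube a4)
      (wt_cube a5) hA (t1.1.trans hA) (t2.1.trans hA)
    rw [one_mul]; exact wt_cube a0
  · exfalso
    have c1 : wt (x ^ 2 * y) ≠ 1 := fun h => hA (wt_cube h)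
    have c2 : wt (x ^ 2 * z * y) ≠ 1 := fun h => hA (t1.1.symm.trans (wt_cube h))
    have c3 : wt (x ^ 2 * z ^ 2 * y) ≠ 1 := fun h => hA (t2.1.symm.trans (wt_cube h))
    have q1 : ¬ ((wt (x ^ 2 * y) = 0 ∨ wt (x ^ 2 * y) = -1) ∧
      (wt (x ^ 2 * z * y) = 0 ∨ wt (x ^ 2 * z * y) = -1)) :=
      fun h => hz1 (t1.2 (wt_twenty h.1) (wt_twenty h.2))
    have q2 : ¬ ((wt (x ^ 2 * y) = 0 ∨ wt (x ^ 2 * y) = -1) ∧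
      (wt (x ^ 2 * z ^ 2 * y) = 0 ∨ wt (x ^ 2 * z ^ 2 * y) = -1)) :=
      fun h => z2 (t2.2 (wt_twenty h.1) (wt_twenty h.2))
    have q3 : ¬ ((wt (x ^ 2 * z * y) = 0 ∨ wt (x ^ 2 * z * y) = -1) ∧
      (wt (x ^ 2 * z ^ 2 * y) = 0 ∨ wt (x ^ 2 * z ^ 2 * y) = -1)) :=
      fun h => hz1 (t3.2 (wt_twenty h.1) (wt_twenty h.2))
    omega

lemma exists_indep {E : Subgroup G} (hE : Nine E) {z : G} (hz : z ∈ E) :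
    ∃ x ∈ E, x ∉ Subgroup.zpowers z := by
  by_contra! h
  have : E ≤ Subgroup.zpowers z := h
  have fin : Finite E := Nat.finite_of_card_ne_zero (by rw [hE.card]; norm_num)
  have h0 : E = Subgroup.zpowers z := le_antisymm h (Subgroup.zpowers_le.mpr hz)
  have h1 := hE.card
  rw [h0, Nat.card_zpowers] at h1
  have := orderOf_le_of_pow_eq_one (by norm_num) (hE.exp z hz)
  omega

lemma caseA [Fintype G] {E : Subgroup G} [Fintype E] (hE : Nine E) {z y : G}
    (hz : z ∈ E) (hz1 : z ≠ 1) (hy : y ∉ E)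
    (hS : 3 ≤ ∑ e : E, wt ((e : G) * y))
    (a0 : wt y = 1) (a1 : wt (z * y) = 1) (a2 : wt (z ^ 2 * y) = 1) :
    ∃ Q : Subgroup G, IsPGroup 3 Q ∧ E ≤ Q ∧ y ∈ Q := by
  obtain ⟨x, hx, hxz⟩ := exists_indep hE hz
  have hz3 := hE.exp z hz
  have hx3 := hE.exp x hx
  have m0 := E.pow_mem hx 2
  have A1 := lineA hE hx hz hy (wt_cube a0) (wt_cube a1) (wt_cube a2)
  have A2 := lineA hE m0 hz hy (wt_cube a0) (wt_cube a1) (wt_cube a2)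
  have hS' := hS
  rw [nine_sum hE hx hz hz1 hxz (fun e => wt (e * y)), one_mul, a0, a1, a2] at hS'
  by_cases c1 : wt (x * y) = 1 ∧ wt (x * z * y) = 1 ∧ wt (x * z ^ 2 * y) = 1
  · exact twofull hE hx hz hz1 hxz hy hS a0 a1 a2 c1.1 c1.2.1 c1.2.2
  by_cases c2 : wt (x ^ 2 * y) = 1 ∧ wt (x ^ 2 * z * y) = 1 ∧ wt (x ^ 2 * z ^ 2 * y) = 1
  · refine twofull hE m0 hz hz1 ?_ hy hS a0 a1 a2 c2.1 c2.2.1 c2.2.2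
    intro h
    have := (Subgroup.zpowers z).pow_mem h 2
    rw [sq_sq hx3] at this
    exact hxz this
  exfalso
  have d1 : wt (x * y) = 0 ∧ wt (x * z * y) = 0 ∧ wt (x ^ 2 * y) = 0 ∧ wt (x ^ 2 * z * y) = 0 := by
    omega
  obtain ⟨d1, d2, d3, d4⟩ := d1
  exact hz1 (L4 x z y hx3 hz3 (hE.comm x hx z hz) (wt_cube a0) (wt_cube a1) (wt_cube a2)
    (wt_four d1) (wt_four d2) (wt_four d3) (wt_four d4))

lemma sum_shift [Fintype G] {E : Subgroup G} [Fintype E] {u : G} (hu : u ∈ E) (y : G) :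
    ∑ e : E, wt ((e : G) * (u * y)) = ∑ e : E, wt ((e : G) * y) := by
  rw [← Equiv.sum_comp (Equiv.mulRight (⟨u, hu⟩ : E)) (fun e : E => wt ((e : G) * y))]
  simp [mul_assoc]

lemma coset [Fintype G] {E : Subgroup G} [Fintype E] (hE : Nine E) {y : G} (hy : y ∉ E)
    (hS : 3 ≤ ∑ e : E, wt ((e : G) * y)) :
    ∃ Q : Subgroup G, IsPGroup 3 Q ∧ E ≤ Q ∧ y ∈ Q := by
  have notE : ∀ u ∈ E, u * y ∉ E := fun u hu h => hy (by
    have := E.mul_mem (E.inv_mem hu) h; simpa using this)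
  by_cases hline : ∃ u ∈ E, ∃ d ∈ E, d ≠ 1 ∧ wt (u * y) = 1 ∧ wt (d * (u * y)) = 1 ∧
      wt (d ^ 2 * (u * y)) = 1
  · obtain ⟨u, hu, d, hd, hd1, b0, b1, b2⟩ := hline
    obtain ⟨Q, q1, q2, q3⟩ := caseA hE hd hd1 (notE u hu) (by rw [sum_shift hu]; exact hS) b0 b1 b2
    refine ⟨Q, q1, q2, ?_⟩
    have := Q.mul_mem (Q.inv_mem (q2 hu)) q3
    simpa using this
  exfalso
  push Not at hline
  have ne : ∀ u ∈ E, u * y ≠ 1 := fun u hu h => notE u hu (by rw [h]; exact E.one_mem)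
  -- a first element of order three
  obtain ⟨u, hu, hu1⟩ : ∃ u ∈ E, wt (u * y) = 1 := by
    by_contra! h
    have : ∑ e : E, wt ((e : G) * y) ≤ ∑ e : E, (0 : ℤ) := by
      apply Finset.sum_le_sum
      intro e _
      have := wt_le (ne e e.2)
      have := h e e.2
      omega
    simp at this
    omega
  have hline' : ∀ v ∈ E, ∀ d ∈ E, d ≠ 1 → wt (v * (u * y)) = 1 → wt (d * (v * (u * y))) = 1 →
      wt (d ^ 2 * (v * (u * y))) ≠ 1 := by
    intro v hv d hd hd1
    have := hline (v * u) (E.mul_mem hv hu) d hd hd1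
    simpa [mul_assoc] using this
  rw [← sum_shift hu] at hS
  have ne' : ∀ v ∈ E, v * (u * y) ≠ 1 := fun v hv h => ne _ (E.mul_mem hv hu) (by
    rw [mul_assoc]; exact h)
  clear hline notE ne hy
  generalize u * y = y at hS hu1 hline' ne'
  clear hu u
  -- a second one
  obtain ⟨z, hz, hz1, a1⟩ : ∃ z ∈ E, z ≠ 1 ∧ wt (z * y) = 1 := by
    classical
    by_contra! h
    have : ∑ e : E, wt ((e : G) * y) ≤ ∑ e : E, (if e = 1 then 1 else 0 : ℤ) := by
      apply Finset.sum_le_sum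
      intro e _
      split_ifs with he
      · rw [he]; simp [hu1]
      · have := wt_le (ne' e e.2)
        have := h e e.2 (by simpa using he)
        omega
    simp at this
    omega
  have m2 := E.pow_mem hz 2
  have hz3 := hE.exp z hz
  have a2 : wt (z ^ 2 * y) ≤ 0 := by
    have := hline' 1 E.one_mem z hz hz1
    simp only [one_mul] at this
    have := this hu1 a1
    have := wt_le (ne' _ m2)
    omega
  have sq_not : ∀ x, x ^ 3 = 1 → x ∉ Subgroup.zpowers z → x ^ 2 ∉ Subgroup.zpowers z := by
    intro x hx h1 h
    have := (Subgroup.zpowers z).pow_mem h 2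
    rw [sq_sq hx] at this
    exact h1 this
  obtain ⟨x, hx, hxz, a3⟩ : ∃ x ∈ E, x ∉ Subgroup.zpowers z ∧ wt (x * y) = 1 := by
    by_contra! h
    obtain ⟨x, hx, hxz⟩ := exists_indep hE hz
    have mz := Subgroup.mem_zpowers z
    have k1 : ∀ v, v ∉ Subgroup.zpowers z → ∀ j : ℕ, v * z ^ j ∉ Subgroup.zpowers z := by
      intro v hv j h
      have := (Subgroup.zpowers z).mul_mem h ((Subgroup.zpowers z).inv_mem
        ((Subgroup.zpowers z).pow_mem mz j))
      rw [mul_inv_cancel_right] at this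
      exact hv this
    have k2 : ∀ v ∈ E, v ∉ Subgroup.zpowers z → wt (v * y) ≤ 0 := by
      intro v hv hv1
      have := wt_le (ne' _ hv)
      have := h v hv hv1
      omega
    have x2 := sq_not x (hE.exp x hx) hxz
    have p0 := E.pow_mem hx 2
    rw [nine_sum hE hx hz hz1 hxz (fun e => wt (e * y)), one_mul] at hS
    have c1 := k2 _ hx hxz
    have c2 := k2 _ (E.mul_mem hx hz) (by simpa using k1 x hxz 1)
    have c3 := k2 _ (E.mul_mem hx m2) (k1 x hxz 2)
    have c4 := k2 _ p0 x2
    have c5 := k2 _ (E.mul_mem p0 hz) (by simpa using k1 _ x2 1)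
    have c6 := k2 _ (E.mul_mem p0 m2) (k1 _ x2 2)
    omega
  have hx3 := hE.exp x hx
  have hc := hE.comm x hx z hz
  have hx1 : x ≠ 1 := fun h => hxz (by rw [h]; exact (Subgroup.zpowers z).one_mem)
  have xz1 : x * z ≠ 1 := fun h => hxz (by
    rw [mul_eq_one_iff_eq_inv.mp h]; exact (Subgroup.zpowers z).inv_mem (Subgroup.mem_zpowers z))
  have xz2 : x * z ^ 2 ≠ 1 := fun h => hxz (by
    rw [mul_eq_one_iff_eq_inv.mp h, sq_inv hz3]; exact (Subgroup.mem_zpowers z))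
  -- normal forms
  have zx : ∀ g, z * (x * g) = x * (z * g) := by
    intro g; rw [← mul_assoc, ← hc.eq, mul_assoc]
  have zzz : ∀ g, z * (z * (z * g)) = g := by
    intro g
    have : z * (z * (z * g)) = z ^ 3 * g := by simp [pow_succ, mul_assoc]
    rw [this, hz3, one_mul]
  have xxx : ∀ g, x * (x * (x * g)) = g := by
    intro g
    have : x * (x * (x * g)) = x ^ 3 * g := by simp [pow_succ, mul_assoc]
    rw [this, hx3, one_mul]
  have p2 := E.pow_mem hx 2
  have q11 := E.mul_mem hx hz
  have q12 := E.mul_mem hx m2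
  have l1 := hline' 1 E.one_mem x hx hx1
  have l2 := hline' z hz (x * z ^ 2) q12 xz2
  have l3 := hline' x hx z hz hz1
  have l4 := hline' z hz x hx hx1
  have l5 := hline' 1 E.one_mem (x * z ^ 2) q12 xz2
  have b1 := wt_le (ne' _ q11)
  have b2 := wt_le (ne' _ q12)
  have b3 := wt_le (ne' _ p2)
  have b4 := wt_le (ne' _ (E.mul_mem p2 hz))
  have b5 := wt_le (ne' _ (E.mul_mem p2 m2))
  have K1 := L5 x z (z ^ 2 * y) hx3 hz3 hc
  have K2 := L5 (x * z ^ 2) (z ^ 2) (z ^ 2 * y) (hE.exp _ q12) (hE.exp _ m2) (hE.comm _ q12 _ m2)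
  have K3 := L5 (z * x ^ 2) (x ^ 2) (x ^ 2 * y) (hE.exp _ (E.mul_mem hz p2)) (hE.exp _ p2)
    (hE.comm _ (E.mul_mem hz p2) _ p2)
  have K4 := L6 x z (z ^ 2 * y) hx3 hz3 hc
  rw [nine_sum hE hx hz hz1 hxz (fun e => wt (e * y)), one_mul] at hS
  have zx1 : z * x ^ 2 ≠ 1 := fun h => sq_not x hx3 hxz (by
    rw [← mul_eq_one_iff_inv_eq.mp h]
    exact (Subgroup.zpowers z).inv_mem (Subgroup.mem_zpowers z))
  simp only [pow_two, mul_assoc, zx, zzz, xxx, one_mul] at *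
  have c0 := wt_cube hu1
  have cz := wt_cube a1
  have cx := wt_cube a3
  by_cases d1 : wt (x * (z * y)) = 1
  · exact hx1 (K1 c0 cz cx (wt_cube d1) (wt_twenty (by omega)) (wt_twenty (by omega)))
  by_cases d2 : wt (x * (z * (z * y))) = 1
  · exact xz2 (K2 cz c0 cx (wt_cube d2) (wt_twenty (by omega)) (wt_twenty (by omega)))
  by_cases d3 : wt (x * (x * (z * y))) = 1
  · exact zx1 (K3 cx c0 cz (wt_cube d3) (wt_twenty (by omega)) (wt_twenty (by omega)))
  · exact hz1 (K4 c0 cz cx (wt_four (by omega)) (wt_four (by omega)) (wt_four (by omega)))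

end AO

namespace AO
open Equiv

lemma solv_pgroup {p : ℕ} [Fact p.Prime] {H : Type*} [Group H] [Finite H] (h : IsPGroup p H) :
    Group.IsSolvable H := by
  have := h.isNilpotent
  infer_instance

lemma solv_of_perm {G : Type*} [Group G] (H : Subgroup G) [Group.IsSolvable H]
    [Group.IsSolvable (Perm (G ⧸ H))] : Group.IsSolvable G := by
  refine solvable_of_ker_le_range H.subtype (MulAction.toPermHom G (G ⧸ H)) ?_
  rw [← Subgroup.normalCore_eq_ker, Subgroup.range_subtype]
  exact H.normalCore_le

lemma solv_of_permFin {G : Type*} [Group G] [Finite G] (H : Subgroup G) [Group.IsSolvable H] {k : ℕ}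
    (hk : H.index = k) (hs : Group.IsSolvable (Perm (Fin k))) : Group.IsSolvable G := by
  have e : (G ⧸ H) ≃ Fin k := by
    rw [← hk]
    exact (Finite.equivFin (G ⧸ H))
  have : Group.IsSolvable (Perm (G ⧸ H)) :=
    solvable_of_solvable_injective (f := (e.permCongrHom.toMonoidHom)) e.permCongrHom.injective
  exact solv_of_perm H

lemma perm2 : Group.IsSolvable (Perm (Fin 2)) := by
  apply solv_pgroup (p := 2)
  exact IsPGroup.of_card (n := 1) (by simp [Nat.card_eq_fintype_card, Fintype.card_perm])

lemma perm1 : Group.IsSolvable (Perm (Fin 1)) := by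
  apply solv_pgroup (p := 2)
  exact IsPGroup.of_card (n := 0) (by simp [Nat.card_eq_fintype_card, Fintype.card_perm])

lemma solv_mul {G : Type*} [Group G] [Finite G] {p k a : ℕ} [hp : Fact p.Prime]
    (hs : Group.IsSolvable (Perm (Fin k))) (hk : ¬ p ∣ k) (h : Nat.card G = p ^ a * k) :
    Group.IsSolvable G := by
  obtain ⟨P⟩ : Nonempty (Sylow p G) := inferInstance
  have hP := P.card_eq_multiplicity
  have hk0 : k ≠ 0 := fun h => hk (h ▸ dvd_zero p)
  have hf : (Nat.card G).factorization p = a := by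
    rw [h, Nat.factorization_mul (pow_ne_zero _ hp.1.ne_zero) hk0]
    simp [hp.1.factorization_self, Nat.factorization_eq_zero_of_not_dvd hk]
  rw [hf] at hP
  have hi := (P : Subgroup G).card_mul_index
  rw [h] at hi
  have hP' : Nat.card (P : Subgroup G) = p ^ a := hP
  rw [hP'] at hi
  have hi' := Nat.eq_of_mul_eq_mul_left (pow_pos hp.1.pos a) hi
  have : Group.IsSolvable (P : Subgroup G) := solv_pgroup (p := p) P.isPGroup'
  exact solv_of_permFin (P : Subgroup G) hi' hs

lemma perm3 : Group.IsSolvable (Perm (Fin 3)) := by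
  have : Fact (Nat.Prime 3) := ⟨by norm_num⟩
  exact solv_mul (p := 3) (a := 1) perm2 (by norm_num)
    (by simp [Nat.card_eq_fintype_card, Fintype.card_perm, Nat.factorial])

lemma perm4 : Group.IsSolvable (Perm (Fin 4)) := 
  solv_mul (p := 2) (a := 3) perm3 (by norm_num)
    (by simp [Nat.card_eq_fintype_card, Fintype.card_perm, Nat.factorial])

lemma solv_ext {G : Type*} [Group G] (N : Subgroup G) [N.Normal] [Group.IsSolvable N]
    [Group.IsSolvable (G ⧸ N)] : Group.IsSolvable G := by
  refine solvable_of_ker_le_range N.subtype (QuotientGroup.mk' N) ?_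
  simp

universe u
lemma solv_conj (n : ℕ) : ∀ (L : Type u) [Group L] [Finite L], Nat.card L ≤ n →
    (∀ a b : L, Commute a (b * a * b⁻¹)) → Group.IsSolvable L := by
  induction n with
  | zero => intro L _ _ h; have := Nat.card_pos (α := L); omega
  | succ n ih =>
    intro L _ _ h hL
    by_cases ht : ∃ a : L, a ≠ 1
    · obtain ⟨a, ha⟩ := ht
      have c2 : ∀ u ∈ Group.conjugatesOfSet {a}, ∀ v ∈ Group.conjugatesOfSet {a}, u * v = v * u := by
        intro u hu v hv
        rw [Group.mem_conjugatesOfSet_iff] at hu hv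
        obtain ⟨a', ha', hu⟩ := hu
        obtain ⟨a'', ha'', hv⟩ := hv
        rw [Set.mem_singleton_iff.mp ha'] at hu
        rw [Set.mem_singleton_iff.mp ha''] at hv
        obtain ⟨c, rfl⟩ := isConj_iff.mp hu
        obtain ⟨d, rfl⟩ := isConj_iff.mp hv
        have := ((hL a (c⁻¹ * d)).map (MulAut.conj c)).eq
        simp only [MulAut.conj_apply] at this
        have e : c * (c⁻¹ * d * a * (c⁻¹ * d)⁻¹) * c⁻¹ = d * a * d⁻¹ := by group
        rwa [e] at this
      have hm : IsMulCommutative (Subgroup.normalClosure {a}) := Subgroup.isMulCommutative_closure c2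
      have : Group.IsSolvable (Subgroup.normalClosure {a}) := isSolvable_of_comm fun x y => hm.is_comm.comm x y
      have : Group.IsSolvable (L ⧸ Subgroup.normalClosure {a}) := by
        apply ih
        · have h1 := (Subgroup.normalClosure {a}).card_mul_index
          have h2 : 1 < Nat.card (Subgroup.normalClosure {a}) := by
            rw [Subgroup.one_lt_card_iff_ne_bot]
            intro hb
            have : a ∈ Subgroup.normalClosure {a} := Subgroup.subset_normalClosure rfl
            rw [hb] at this
            exact ha this
          have h3 : Nat.card (L ⧸ Subgroup.normalClosure {a}) = (Subgroup.normalClosure {a}).index := rfl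
          rw [h3]
          have h4 : 0 < (Subgroup.normalClosure {a}).index := Nat.card_pos
          nlinarith
        · intro x y
          induction x using QuotientGroup.induction_on with | _ x
          induction y using QuotientGroup.induction_on with | _ y
          exact (hL x y).map (QuotientGroup.mk' (Subgroup.normalClosure {a}))
      exact solv_ext (Subgroup.normalClosure {a})
    · push Not at ht
      exact isSolvable_of_comm fun x y => by rw [ht x, ht y]

lemma sigma_comm {G : Type*} [Group G] (L : Subgroup G) (s : MulAut G) (hs : ∀ l ∈ L, s l ∈ L)
    (h3 : ∀ l, s (s (s l)) = l) (hE : ∀ l ∈ L, s l * s (s l) * l = 1) :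
    ∀ a ∈ L, ∀ b ∈ L, Commute a (b * a * b⁻¹) := by
  have B : ∀ b ∈ L, b * s b = (s (s b))⁻¹ := by
    intro b hb
    have h1 := hE _ (hs _ (hs b hb))
    rw [h3] at h1
    exact mul_eq_one_iff_eq_inv.mp h1
  have key : ∀ a ∈ L, ∀ b ∈ L, a * (b * s a * b⁻¹) = (s (s b))⁻¹ * (s (s a))⁻¹ * s (s b) := by
    intro a ha b hb
    have h1 := B _ (L.mul_mem ha hb)
    have h2 := B b hb
    simp only [map_mul, mul_inv_rev] at h1
    calc a * (b * s a * b⁻¹) = (a * b * (s a * s b)) * (b * s b)⁻¹ := by group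
      _ = _ := by rw [h1, h2, inv_inv]
  have k1 : ∀ a ∈ L, ∀ b ∈ L, Commute a (b * s a * b⁻¹) := by
    intro a ha b hb
    have h1 := key a ha b hb
    have h2 := key _ (L.inv_mem ha) b hb
    simp only [map_inv] at h2
    have h4 : (a * (b * s a * b⁻¹))⁻¹ = a⁻¹ * (b * (s a)⁻¹ * b⁻¹) := by
      rw [h2, h1]; group
    have h5 := congrArg (·⁻¹) h4
    simp only [inv_inv] at h5
    rw [Commute, SemiconjBy, h5]; group
  intro a ha b hb
  have h2 := k1 _ (hs _ (hs a ha)) (b⁻¹) (L.inv_mem hb)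
  rw [h3] at h2
  have h4 : Commute a (b * s (s a) * b⁻¹) := by
    have h5 := h2.map (MulAut.conj b)
    simp only [MulAut.conj_apply] at h5
    have : b * (b⁻¹ * a * b⁻¹⁻¹) * b⁻¹ = a := by group
    rw [this] at h5
    exact h5.symm
  have h6 := (k1 a ha b hb).mul_right h4
  have : b * s a * b⁻¹ * (b * s (s a) * b⁻¹) = (b * a * b⁻¹)⁻¹ := by
    have := mul_eq_one_iff_eq_inv.mp (hE a ha)
    calc _ = b * (s a * s (s a)) * b⁻¹ := by group
      _ = _ := by rw [this]; group
  rw [this] at h6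
  simpa using h6.inv_right

lemma solv_outside {G : Type*} [Group G] [Finite G] (L : Subgroup G) [L.Normal] (x : G)
    (hx : ∀ l ∈ L, (x * l) ^ 3 = 1) : Group.IsSolvable L := by
  have hx3 : x ^ 3 = 1 := by simpa using hx 1 L.one_mem
  have := sigma_comm L (MulAut.conj x) (fun l hl => ‹L.Normal›.conj_mem l hl x)
    (fun l => by
      simp only [MulAut.conj_apply]
      have : x * (x * (x * l * x⁻¹) * x⁻¹) * x⁻¹ = x ^ 3 * l * (x ^ 3)⁻¹ := by
        simp [pow_succ, mul_assoc]
      rw [this, hx3]; simp)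
    (fun l hl => by
      have := hx l hl
      rw [cube_conj _ _ hx3] at this
      simp only [MulAut.conj_apply]
      rw [← this]; simp [pow_two, mul_assoc])
  refine solv_conj (Nat.card L) L le_rfl fun a b => ?_
  have := this a a.2 b b.2
  exact Subtype.ext this

end AO

namespace AO
variable {G : Type*} [Group G] [Fintype G]
open scoped Classical in
/-- elements of order three -/
noncomputable def ord3 (G : Type*) [Group G] [Fintype G] : Finset G :=
  Finset.univ.filter fun g => orderOf g = 3

instance fact3 : Fact (Nat.Prime 3) := ⟨by norm_num⟩

lemma wt_le_ind {G : Type*} [Group G] (g : G) [DecidableEq G] :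
    wt g ≤ (if g = 1 then 3 else 0) + (if orderOf g = 3 then 1 else 0) := by
  by_cases h : g = 1
  · subst h; simp [wt]
  · have : orderOf g ≠ 1 := by rwa [ne_eq, orderOf_eq_one_iff]
    unfold wt; split_ifs <;> simp_all

lemma W_le : ∑ g : G, wt g ≤ 3 + (ord3 G).card := by
  classical
  calc ∑ g : G, wt g ≤ ∑ g : G, ((if g = 1 then 3 else 0) + (if orderOf g = 3 then 1 else 0)) :=
        Finset.sum_le_sum fun g _ => wt_le_ind g
    _ = _ := by
      rw [Finset.sum_add_distrib]
      simp [ord3]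

/-- a prime `p ≥ 5` dividing the order gives a better bound -/
lemma W_le_prime {p : ℕ} (hp : p.Prime) (h5 : 5 ≤ p) (hd : p ∣ Nat.card G) :
    ∑ g : G, wt g ≤ (ord3 G).card - 1 := by
  classical
  have := Fact.mk hp
  obtain ⟨g, hg⟩ := exists_prime_orderOf_dvd_card' p hd
  set T : Finset G := (Finset.Icc 1 4).image (fun k => g ^ k) with hT
  have hTc : T.card = 4 := by
    rw [hT, Finset.card_image_of_injOn]
    · simp
    · intro a ha b hb hab
      simp only [Finset.coe_Icc, Set.mem_Icc] at ha hb
      exact pow_injOn_Iio_orderOf (by rw [hg]; simp; omega) (by rw [hg]; simp; omega) hab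
  have hTo : ∀ h ∈ T, orderOf h = p := by
    intro h hh
    obtain ⟨k, hk, rfl⟩ := Finset.mem_image.mp hh
    rw [Finset.mem_Icc] at hk
    have hc : (orderOf g).Coprime k := by
      rw [hg]
      exact Nat.coprime_of_lt_prime (by omega) (by omega) hp
    exact (Nat.Coprime.orderOf_pow hc).trans hg
  have key : ∀ h : G, wt h ≤ (if h = 1 then 3 else 0) + (if orderOf h = 3 then 1 else 0)
      - (if h ∈ T then 1 else 0) := by
    intro h
    by_cases hh : h ∈ T
    · have ho := hTo h hh
      have h1 : h ≠ 1 := by rintro rfl; rw [orderOf_one] at ho; omega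
      have : wt h ≤ -1 := by unfold wt; rw [ho]; split_ifs <;> omega
      rw [if_pos hh, if_neg h1, if_neg (by omega)]; omega
    · rw [if_neg hh]; have := wt_le_ind h; omega
  calc ∑ g : G, wt g ≤ ∑ h : G, ((if h = 1 then 3 else 0) + (if orderOf h = 3 then 1 else 0)
      - (if h ∈ T then 1 else 0)) :=
        Finset.sum_le_sum fun g _ => key g
    _ = _ := by
      rw [Finset.sum_sub_distrib, Finset.sum_add_distrib]
      simp [ord3, hTc]
      ring

open scoped Classical in
/-- the number of Sylow 3-subgroups containing `x` -/
noncomputable def ns (x : G) : ℕ := (Finset.univ.filter fun Q : Sylow 3 G => x ∈ Q).card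

open scoped Classical in
/-- number of elements of order 3 in `Q` -/
noncomputable def n3 (Q : Sylow 3 G) : ℕ := ((ord3 G).filter fun x => x ∈ Q).card

lemma double_count : ∑ x ∈ ord3 G, ns x = ∑ Q : Sylow 3 G, n3 Q := by
  classical
  have := Finset.sum_card_bipartiteAbove_eq_sum_card_bipartiteBelow
    (s := ord3 G) (t := (Finset.univ : Finset (Sylow 3 G))) (fun x Q => x ∈ Q)
  unfold ns n3
  convert this using 3
  · ext; simp [Finset.mem_bipartiteAbove]
  · ext; simp [Finset.mem_bipartiteBelow]

lemma ns_mod (x : G) (hx : orderOf x = 3) : ns x % 3 = 1 := by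
  classical
  have hp : IsPGroup 3 (Subgroup.zpowers x) :=
    IsPGroup.of_card (n := 1) (by rw [Nat.card_zpowers, hx]; norm_num)
  have h1 := hp.card_modEq_card_fixedPoints (Sylow 3 G)
  have h2 := card_sylow_modEq_one 3 G
  have h3 : Nat.card (MulAction.fixedPoints (Subgroup.zpowers x) (Sylow 3 G)) = ns x := by
    rw [ns, ← Fintype.card_subtype, ← Nat.card_eq_fintype_card]
    apply Nat.card_congr
    apply Equiv.subtypeEquivRight
    intro Q
    rw [hp.sylow_mem_fixedPoints_iff, Subgroup.zpowers_le]
    rfl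
  rw [h3] at h1
  exact h1.symm.trans h2

lemma n3_le (Q : Sylow 3 G) : n3 Q + 1 ≤ Nat.card Q := by
  classical
  have : Nat.card Q = (Finset.univ.filter fun x : G => x ∈ Q).card := by
    rw [← Fintype.card_subtype, ← Nat.card_eq_fintype_card]
    rfl
  rw [this, n3]
  have h1 : (1 : G) ∉ (ord3 G).filter fun x => x ∈ Q := by simp [ord3]
  rw [← Finset.card_insert_of_notMem h1]
  apply Finset.card_le_card
  intro x hx
  rw [Finset.mem_insert] at hx
  rcases hx with rfl | hx
  · simp
  · simp at hx ⊢; exact hx.2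

lemma card_Q (P Q : Sylow 3 G) : Nat.card P = Nat.card Q := Nat.card_congr (P.equiv Q).toEquiv

lemma n3_eq (P Q : Sylow 3 G) : n3 P = n3 Q := by
  classical
  have : ∀ Q : Sylow 3 G, n3 Q = Nat.card {q : Q // orderOf q = 3} := by
    intro Q
    rw [n3, ord3, Finset.filter_filter, ← Fintype.card_subtype, ← Nat.card_eq_fintype_card]
    apply Nat.card_congr
    exact {
      toFun := fun g => ⟨⟨g.1, g.2.2⟩, (Subgroup.orderOf_mk _ _).trans g.2.1⟩
      invFun := fun g => ⟨g.1.1, by rw [Subgroup.orderOf_coe]; exact g.2, g.1.2⟩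
      left_inv := fun g => rfl
      right_inv := fun g => rfl }
  rw [this, this]
  apply Nat.card_congr
  exact (P.equiv Q).toEquiv.subtypeEquiv fun a => by simp

end AO

namespace AO
variable {G : Type*} [Group G] [Fintype G]

lemma nine_mk {a b : G} (ha : orderOf a = 3) (hb : orderOf b = 3) (hab : Commute a b)
    (hn : b ∉ Subgroup.zpowers a) {P : Subgroup G} (haP : a ∈ P) (hbP : b ∈ P) :
    ∃ E : Subgroup G, Nine E ∧ a ∈ E ∧ E ≤ P := by
  have hz : ∀ (m : Subgroup.zpowers a) (n : Subgroup.zpowers b), Commute (m : G) (n : G) := by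
    rintro ⟨_, i, rfl⟩ ⟨_, j, rfl⟩
    exact hab.zpow_zpow i j
  let f := MonoidHom.noncommCoprod (Subgroup.zpowers a).subtype (Subgroup.zpowers b).subtype hz
  have hdis : Disjoint (Subgroup.zpowers a) (Subgroup.zpowers b) := by
    rw [disjoint_iff_inf_le]
    intro y hy
    obtain ⟨hya, hyb⟩ := Subgroup.mem_inf.mp hy
    by_contra hy1
    apply hn
    have h3 : Nat.card (Subgroup.zpowers b) = 3 := by rw [Nat.card_zpowers, hb]
    have hyo : Nat.card (Subgroup.zpowers y) = 3 := by
      have : Subgroup.zpowers y ≤ Subgroup.zpowers b := by rwa [Subgroup.zpowers_le]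
      have := Subgroup.card_dvd_of_le this
      rw [h3, Nat.dvd_prime (by norm_num)] at this
      rcases this with h | h
      · exfalso; apply hy1
        rw [Nat.card_zpowers, orderOf_eq_one_iff] at h
        rw [h]; exact Subgroup.one_mem _
      · exact h
    have : Subgroup.zpowers y = Subgroup.zpowers b :=
      Subgroup.eq_of_le_of_card_ge (by rwa [Subgroup.zpowers_le]) (by rw [h3, hyo])
    have hle : Subgroup.zpowers y ≤ Subgroup.zpowers a := by rwa [Subgroup.zpowers_le]
    rw [this] at hle
    exact hle (Subgroup.mem_zpowers b)
  have hinj : Function.Injective f := by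
    refine (MonoidHom.noncommCoprod_injective _ _ _).mpr ⟨Subtype.val_injective, Subtype.val_injective, ?_⟩
    simpa using hdis
  have hcube : ∀ {c : G}, orderOf c = 3 → ∀ m : Subgroup.zpowers c, (m : G) ^ 3 = 1 := by
    rintro c hc ⟨_, i, rfl⟩
    show (c ^ i) ^ 3 = 1
    rw [← zpow_natCast, zpow_comm, zpow_natCast, ← hc, pow_orderOf_eq_one, one_zpow]
  have hzz : ∀ {c : G} (m n : Subgroup.zpowers c), Commute (m : G) (n : G) := by
    rintro c ⟨_, i, rfl⟩ ⟨_, j, rfl⟩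
    exact (Commute.refl c).zpow_zpow i j
  have hf : ∀ m n, f (m, n) = (m : G) * n := fun m n => rfl
  refine ⟨f.range, ⟨?_, ?_, ?_⟩, ?_, ?_⟩
  · rintro _ ⟨⟨m, n⟩, rfl⟩ _ ⟨⟨m', n'⟩, rfl⟩
    rw [hf, hf]
    exact ((hzz m m').mul_right (hz m n')).mul_left ((hz m' n).symm.mul_right (hzz n n'))
  · rintro _ ⟨⟨m, n⟩, rfl⟩
    rw [hf, (hz m n).mul_pow, hcube ha, hcube hb, one_mul]
  · rw [← Nat.card_congr (MonoidHom.ofInjective hinj).toEquiv, Nat.card_prod, Nat.card_zpowers,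
      Nat.card_zpowers, ha, hb]
  · exact ⟨(⟨a, Subgroup.mem_zpowers a⟩, 1), by rw [hf]; simp⟩
  · rintro _ ⟨⟨m, n⟩, rfl⟩
    rw [hf]
    exact P.mul_mem ((Subgroup.zpowers_le.mpr haP) m.2) ((Subgroup.zpowers_le.mpr hbP) n.2)

/-- small order -/
lemma solv_small (h3 : ¬ 3 ∣ Nat.card G) (h8 : Nat.card G ≤ 8) : Group.IsSolvable G := by
  have hpos : 0 < Nat.card G := Nat.card_pos
  have key : ∀ p n : ℕ, p.Prime → Nat.card G = p ^ n → Group.IsSolvable G := by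
    intro p n hp hc
    have := Fact.mk hp
    exact solv_pgroup (IsPGroup.of_card hc)
  generalize hc : Nat.card G = c at *
  interval_cases c
  · exact key 2 0 (by norm_num) (by norm_num)
  · exact key 2 1 (by norm_num) (by norm_num)
  · omega
  · exact key 2 2 (by norm_num) (by norm_num)
  · exact key 5 1 (by norm_num) (by norm_num)
  · omega
  · exact key 7 1 (by norm_num) (by norm_num)
  · exact key 2 3 (by norm_num) (by norm_num)

lemma solv_k0 (h3 : ¬ 3 ∣ Nat.card G) (h : 7 * (Nat.card G : ℤ) < 20 * ∑ g : G, wt g) :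
    Group.IsSolvable G := by
  have h0 : (ord3 G).card = 0 := by
    rw [Finset.card_eq_zero, Finset.eq_empty_iff_forall_notMem]
    intro x hx
    apply h3
    have : orderOf x = 3 := by simpa [ord3] using hx
    rw [← this]; exact orderOf_dvd_natCard x
  have := W_le (G := G)
  rw [h0] at this
  exact solv_small h3 (by push_cast at this; omega)

lemma ns_pos (x : G) (hx : orderOf x = 3) : 1 ≤ ns x := by
  have := ns_mod x hx; omega

lemma sum_n3 (P : Sylow 3 G) : ∑ x ∈ ord3 G, ns x = Nat.card (Sylow 3 G) * n3 P := by
  rw [double_count, Finset.sum_congr rfl fun Q _ => n3_eq Q P]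
  simp [Nat.card_eq_fintype_card]

lemma mem_ord3 {x : G} : x ∈ ord3 G ↔ orderOf x = 3 := by simp [ord3]

lemma card_ord3_le (P : Sylow 3 G) : (ord3 G).card ≤ Nat.card (Sylow 3 G) * n3 P := by
  rw [← sum_n3, Finset.card_eq_sum_ones]
  exact Finset.sum_le_sum fun x hx => ns_pos x (mem_ord3.mp hx)

end AO

namespace AO
variable {G : Type*} [Group G] [Fintype G]

lemma card_nu (P : Sylow 3 G) : ∃ ν : ℕ, 1 ≤ ν ∧
    (P : Subgroup G).index = ν * Nat.card (Sylow 3 G) ∧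
    Nat.card (Subgroup.normalizer (P : Set G)) = Nat.card P * ν := by
  refine ⟨(P : Subgroup G).relIndex (Subgroup.normalizer (P : Set G)), ?_, ?_, ?_⟩
  · exact Nat.one_le_iff_ne_zero.mpr Subgroup.index_ne_zero_of_finite
  · rw [P.card_eq_index_normalizer]
    exact (Subgroup.relIndex_mul_index Subgroup.le_normalizer).symm
  · have h1 := (P : Subgroup G).card_mul_index
    have h2 := (Subgroup.normalizer (P : Set G)).card_mul_index
    rw [← Subgroup.relIndex_mul_index
      (Subgroup.le_normalizer : (P : Subgroup G) ≤ Subgroup.normalizer (P : Set G)),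
      ← mul_assoc] at h1
    exact (Nat.eq_of_mul_eq_mul_right
      (Nat.pos_of_ne_zero Subgroup.index_ne_zero_of_finite) (h1.trans h2.symm)).symm

lemma n3_ge {P : Sylow 3 G} (hP : Nat.card P = 3) : 2 ≤ n3 P := by
  classical
  have : Nat.card P = (Finset.univ.filter fun x : G => x ∈ P).card := by
    rw [← Fintype.card_subtype, ← Nat.card_eq_fintype_card]
    rfl
  have h2 : (Finset.univ.filter fun x : G => x ∈ P) ⊆
      insert 1 ((ord3 G).filter fun x => x ∈ P) := by
    intro x hx
    simp only [Finset.mem_filter, Finset.mem_univ, true_and] at hx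
    simp only [Finset.mem_insert, Finset.mem_filter, mem_ord3]
    by_cases h1 : x = 1
    · exact Or.inl h1
    · refine Or.inr ⟨orderOf_eq_prime ?_ h1, hx⟩
      have hP' : Nat.card ↥P = 3 := hP
      have := pow_card_eq_one' (x := (⟨x, hx⟩ : P))
      rw [hP'] at this
      exact congrArg Subtype.val this
  have h3 := Finset.card_le_card h2
  have h4 := Finset.card_insert_le (1 : G) ((ord3 G).filter fun x => x ∈ P)
  unfold n3
  omega

lemma ns_le {P : Sylow 3 G} (hP : Nat.card P = 3) (x : G) (hx : orderOf x = 3) : ns x ≤ 1 := by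
  classical
  unfold ns
  rw [Finset.card_le_one]
  have key : ∀ Q : Sylow 3 G, x ∈ Q → Subgroup.zpowers x = (Q : Subgroup G) := by
    intro Q hQ
    apply Subgroup.eq_of_le_of_card_ge
    · rw [Subgroup.zpowers_le]; exact hQ
    · rw [Nat.card_zpowers, hx]; exact ((card_Q Q P).trans hP).le
  intro Q hQ R hR
  simp only [Finset.mem_filter, Finset.mem_univ, true_and] at hQ hR
  exact Sylow.ext ((key Q hQ).symm.trans (key R hR))

lemma solv_k1 (P : Sylow 3 G) (hP : Nat.card P = 3)
    (h : 7 * (Nat.card G : ℤ) < 20 * ∑ g : G, wt g) : Group.IsSolvable G := by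
  classical
  obtain ⟨ν, hν, hidx, hN⟩ := card_nu P
  have ha := card_ord3_le P
  have hn3 := n3_le P
  have hcard := (P : Subgroup G).card_mul_index
  have hP' : Nat.card (P : Subgroup G) = 3 := hP
  rw [hP', hidx] at hcard
  have hnpos : 0 < Nat.card (Sylow 3 G) := Nat.card_pos
  set n := Nat.card (Sylow 3 G) with hn
  have ha2 : (ord3 G).card ≤ 2 * n := by
    calc _ ≤ n * n3 P := ha
      _ ≤ n * 2 := Nat.mul_le_mul_left _ (by omega)
      _ = _ := by ring
  by_cases h2 : 2 ≤ ν
  · have hG : 6 * n ≤ Nat.card G := by rw [← hcard]; nlinarith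
    have hpr : ∀ {d : ℕ}, d.Prime → d ∣ (P : Subgroup G).index → d = 2 := by
      intro d hd hdd
      have hdG : d ∣ Nat.card G := by
        rw [← hcard, ← hidx]; exact hdd.mul_left 3
      have h3 : d ≠ 3 := by rintro rfl; exact P.not_dvd_index hdd
      have h4 : d ≠ 4 := by rintro rfl; norm_num at hd
      by_contra hd2
      have := hd.two_le
      have := W_le_prime hd (by omega) hdG
      omega
    have := Nat.eq_prime_pow_of_unique_prime_dvd (P : Subgroup G).index_ne_zero_of_finite hpr
    have : Nat.card G = 2 ^ (P : Subgroup G).index.primeFactorsList.length * 3 := by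
      rw [← this, ← hcard, ← hidx]; ring
    exact solv_mul perm3 (by norm_num) this
  · have hν1 : ν = 1 := by omega
    subst hν1
    rw [one_mul] at hidx hcard
    have hle : (P : Subgroup G) ≤ Subgroup.normalizer (P : Set G) := Subgroup.le_normalizer
    have heq : (P : Subgroup G) = Subgroup.normalizer (P : Set G) :=
      Subgroup.eq_of_le_of_card_ge hle (by rw [hN, mul_one])
    have hcomm : ∀ a ∈ P, ∀ b ∈ P, a * b = b * a := by
      have : IsCyclic P := isCyclic_of_prime_card hP
      intro a ha b hb
      have := IsMulCommutative.is_comm.comm (⟨a, ha⟩ : P) ⟨b, hb⟩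
      exact congrArg Subtype.val this
    have hNC : Subgroup.normalizer (P : Set G) ≤ Subgroup.centralizer (P : Set G) := by
      rw [← heq]
      intro a ha
      rw [Subgroup.mem_centralizer_iff]
      intro b hb
      exact hcomm b hb a ha
    set L := (MonoidHom.transferSylow P hNC).ker with hL
    have hLd : ¬ 3 ∣ Nat.card L := MonoidHom.not_dvd_card_ker_transferSylow P hNC
    have hLc : L.IsComplement' P := MonoidHom.ker_transferSylow_isComplement' P hNC
    have hLcard : Nat.card L * 3 = Nat.card G := by rw [← hP']; exact hLc.card_mul_card
    have hLi : L.index = 3 := by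
      have := L.card_mul_index
      have hp : 0 < Nat.card L := Nat.card_pos
      rw [← hLcard] at this
      exact Nat.eq_of_mul_eq_mul_left hp this
    -- all elements outside `L` have order three
    have ha3 : 2 * n ≤ (ord3 G).card := by
      calc 2 * n ≤ n * n3 P := by have := n3_ge hP; nlinarith
        _ = ∑ x ∈ ord3 G, ns x := (sum_n3 P).symm
        _ ≤ ∑ x ∈ ord3 G, 1 := Finset.sum_le_sum fun x hx => ns_le hP x (mem_ord3.mp hx)
        _ = _ := by simp
    have hLf : (Finset.univ.filter fun x : G => x ∈ L).card = n := by
      rw [← Fintype.card_subtype, ← Nat.card_eq_fintype_card]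
      have : Nat.card {x // x ∈ L} = Nat.card L := rfl
      omega
    have hLf2 : (Finset.univ.filter fun x : G => x ∉ L).card = 2 * n := by
      have h1 := Finset.card_filter_add_card_filter_not (s := (Finset.univ : Finset G)) (fun x => x ∈ L)
      rw [Finset.card_univ, ← Nat.card_eq_fintype_card] at h1
      omega
    have hsub : ord3 G ⊆ Finset.univ.filter fun x : G => x ∉ L := by
      intro x hx
      simp only [Finset.mem_filter, Finset.mem_univ, true_and]
      intro hxL
      apply hLd
      rw [← mem_ord3.mp hx, ← Subgroup.orderOf_mk x hxL]
      exact orderOf_dvd_natCard _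
    have heq3 := Finset.eq_of_subset_of_card_le hsub (by omega)
    have hout : ∀ y : G, y ∉ L → y ^ 3 = 1 := by
      intro y hy
      have : y ∈ ord3 G := by rw [heq3]; simpa using hy
      rw [← mem_ord3.mp this]; exact pow_orderOf_eq_one y
    obtain ⟨x, hx⟩ : ∃ x, x ∉ L := by
      by_contra! hall
      have : L = ⊤ := by rw [Subgroup.eq_top_iff']; exact hall
      rw [this, Subgroup.index_top] at hLi
      omega
    have hLs : Group.IsSolvable L := solv_outside L x fun l hl => hout _ fun hc =>
      hx ((Subgroup.mul_mem_cancel_right L hl).mp hc)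
    have hq : Group.IsSolvable (G ⧸ L) :=
      solv_pgroup (p := 3) (IsPGroup.of_card (n := 1) (by
        rw [pow_one]; exact hLi))
    exact solv_ext L

end AO

namespace AO
variable {G : Type*} [Group G] [Fintype G]

lemma ns_le_n (x : G) : ns x ≤ Nat.card (Sylow 3 G) := by
  classical
  unfold ns
  rw [Nat.card_eq_fintype_card]
  exact Finset.card_le_univ _

lemma exists_x0 (P : Sylow 3 G) (h9 : 9 ≤ Nat.card P)
    (h : 7 * (Nat.card G : ℤ) < 20 * ∑ g : G, wt g) : ∃ x : G, orderOf x = 3 ∧ ns x = 1 := by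
  classical
  by_contra! hne
  have h4 : ∀ x : G, orderOf x = 3 → 4 ≤ ns x := by
    intro x hx
    have := hne x hx
    have := ns_mod x hx
    omega
  obtain ⟨ν, hν, hidx, -⟩ := card_nu P
  have hcard := (P : Subgroup G).card_mul_index
  set n := Nat.card (Sylow 3 G) with hn
  have hn3 := n3_le P
  have ha : 4 * (ord3 G).card ≤ n * n3 P := by
    rw [← sum_n3, mul_comm, ← smul_eq_mul, ← Finset.sum_const]
    exact Finset.sum_le_sum fun x hx => h4 x (mem_ord3.mp hx)
  have h3 : 3 ∣ Nat.card G := by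
    obtain ⟨k, hk⟩ := IsPGroup.iff_card.mp P.isPGroup'
    have : k ≠ 0 := by
      rintro rfl
      have : Nat.card P = 1 := hk
      omega
    have h1 : 3 ∣ Nat.card (P : Subgroup G) := by
      have := dvd_pow_self 3 this
      rwa [← hk] at this
    exact h1.trans (P : Subgroup G).card_subgroup_dvd_card
  obtain ⟨x, hx⟩ := exists_prime_orderOf_dvd_card' 3 h3
  have hn4 : 4 ≤ n := (h4 x hx).trans (ns_le_n x)
  have hG : n * (n3 P + 1) ≤ Nat.card G := by
    rw [← hcard, hidx]
    calc n * (n3 P + 1) ≤ n * Nat.card P := Nat.mul_le_mul_left _ hn3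
      _ = Nat.card P * (1 * n) := by ring
      _ ≤ _ := Nat.mul_le_mul_left _ (Nat.mul_le_mul_right _ hν)
  have hG2 : 36 ≤ Nat.card G := by
    rw [← hcard, hidx]
    calc 36 = 9 * (1 * 4) := by norm_num
      _ ≤ _ := Nat.mul_le_mul h9 (Nat.mul_le_mul hν hn4)
  have hW := W_le (G := G)
  rw [mul_add, mul_one] at hG
  generalize n * n3 P = t at *
  omega

lemma exists_E (P : Sylow 3 G) (h9 : 9 ≤ Nat.card P)
    (h : 7 * (Nat.card G : ℤ) < 20 * ∑ g : G, wt g) (x : G) (hx : orderOf x = 3) (hxP : x ∈ P) :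
    Group.IsSolvable G ∨ ∃ E : Subgroup G, Nine E ∧ x ∈ E ∧ E ≤ P := by
  classical
  have : Nontrivial (P : Subgroup G) := by
    rw [← Finite.one_lt_card_iff_nontrivial]; exact lt_of_lt_of_le (by norm_num) h9
  have hc := P.isPGroup'.center_nontrivial
  have hcp : IsPGroup 3 (Subgroup.center (P : Subgroup G)) := P.isPGroup'.to_subgroup _
  have h3 : 3 ∣ Nat.card (Subgroup.center (P : Subgroup G)) := by
    obtain ⟨k, hk, hk2⟩ := (hcp.nontrivial_iff_card).mp hc
    rw [hk2]; exact dvd_pow_self 3 hk.ne'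
  obtain ⟨z, hz⟩ := exists_prime_orderOf_dvd_card' 3 h3
  have hzo : orderOf ((z : (P : Subgroup G)) : G) = 3 := by
    rw [Subgroup.orderOf_coe, Subgroup.orderOf_coe, hz]
  have hzc : ∀ y ∈ P, Commute y ((z : (P : Subgroup G)) : G) := by
    intro y hy
    have := (Subgroup.mem_center_iff.mp z.2) ⟨y, hy⟩
    exact congrArg Subtype.val this
  by_cases hzx : ((z : (P : Subgroup G)) : G) ∈ Subgroup.zpowers x
  · -- then `x` is central in `P`
    have hxz : x ∈ Subgroup.zpowers ((z : (P : Subgroup G)) : G) := by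
      have : Subgroup.zpowers ((z : (P : Subgroup G)) : G) = Subgroup.zpowers x :=
        Subgroup.eq_of_le_of_card_ge (by rwa [Subgroup.zpowers_le])
          (by rw [Nat.card_zpowers, Nat.card_zpowers, hzo, hx])
      rw [this]; exact Subgroup.mem_zpowers x
    have hxc : ∀ y ∈ P, Commute x y := by
      intro y hy
      obtain ⟨i, hi⟩ := hxz
      rw [← hi]
      exact ((hzc y hy).zpow_right i).symm
    by_cases hex : ∃ y ∈ P, orderOf y = 3 ∧ y ∉ Subgroup.zpowers x
    · obtain ⟨y, hyP, hyo, hy⟩ := hex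
      exact Or.inr (nine_mk hx hyo (hxc y hyP) hy hxP hyP)
    · push Not at hex
      left
      have hn3 : n3 P ≤ 2 := by
        have hsub : insert 1 ((ord3 G).filter fun y => y ∈ P) ⊆
            Finset.univ.filter fun y => y ∈ Subgroup.zpowers x := by
          intro y hy
          rw [Finset.mem_insert, Finset.mem_filter, mem_ord3] at hy
          simp only [Finset.mem_filter, Finset.mem_univ, true_and]
          rcases hy with rfl | hy
          · exact Subgroup.one_mem _
          · exact hex y hy.2 hy.1
        have h1 := Finset.card_le_card hsub
        rw [Finset.card_insert_of_notMem (by simp [ord3]), ← Fintype.card_subtype,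
          ← Nat.card_eq_fintype_card] at h1
        have h2 : Nat.card {y // y ∈ Subgroup.zpowers x} = 3 := by
          rw [← hx]; exact Nat.card_zpowers x
        rw [h2] at h1
        unfold n3
        omega
      obtain ⟨ν, hν, hidx, -⟩ := card_nu P
      have hcard := (P : Subgroup G).card_mul_index
      have ha := card_ord3_le P
      have hW := W_le (G := G)
      have hnpos : 0 < Nat.card (Sylow 3 G) := Nat.card_pos
      set n := Nat.card (Sylow 3 G) with hn
      have ha2 : (ord3 G).card ≤ 2 * n := by
        calc _ ≤ n * n3 P := ha
          _ ≤ n * 2 := Nat.mul_le_mul_left _ hn3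
          _ = _ := by ring
      have hG : 9 * n ≤ Nat.card G := by
        rw [← hcard, hidx]
        calc 9 * n = 9 * (1 * n) := by ring
          _ ≤ _ := Nat.mul_le_mul h9 (Nat.mul_le_mul_right _ hν)
      have hmod : n % 3 = 1 := card_sylow_modEq_one 3 G
      have hG14 : Nat.card G ≤ 14 := by omega
      have hi : (P : Subgroup G).index = 1 := by
        have h0 : (P : Subgroup G).index ≠ 0 := Subgroup.index_ne_zero_of_finite
        by_contra h1
        have : 2 ≤ (P : Subgroup G).index := by omega
        have := Nat.mul_le_mul h9 this
        rw [hcard] at this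
        omega
      have hPs : Group.IsSolvable (P : Subgroup G) := solv_pgroup P.isPGroup'
      exact solv_of_permFin (P : Subgroup G) hi perm1
  · exact Or.inr (nine_mk hx hzo (hzc x hxP) hzx hxP z.1.2)

lemma S_le {E : Subgroup G} [Fintype E] (hE : Nine E) [DecidablePred (· ∈ E)] (g : G) :
    ∑ e : E, wt ((e : G) * g) ≤ 9 + 2 * (if g ∈ E then 1 else 0) := by
  classical
  have hp : ∀ e : E, wt ((e : G) * g) ≤ 1 + 2 * (if (e : G) * g = 1 then 1 else 0) := by
    intro e
    by_cases h1 : (e : G) * g = 1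
    · rw [if_pos h1, h1]; simp [wt]
    · rw [if_neg h1]; simpa using wt_le h1
  have hc : Fintype.card E = 9 := by rw [← Nat.card_eq_fintype_card]; exact hE.card
  refine (Finset.sum_le_sum fun e _ => hp e).trans ?_
  rw [Finset.sum_add_distrib, ← Finset.mul_sum]
  simp only [Finset.sum_const, Finset.card_univ, hc]
  have : ∑ e : E, (if (e : G) * g = 1 then (1 : ℤ) else 0) ≤ if g ∈ E then 1 else 0 := by
    split_ifs with hg
    · rw [Finset.sum_boole]
      have : (Finset.univ.filter fun e : E => (e : G) * g = 1).card ≤ 1 := by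
        rw [Finset.card_le_one]
        intro a ha b hb
        simp only [Finset.mem_filter, Finset.mem_univ, true_and] at ha hb
        exact Subtype.ext (mul_right_cancel (ha.trans hb.symm))
      exact_mod_cast this
    · apply le_of_eq
      apply Finset.sum_eq_zero
      intro e _
      rw [if_neg]
      intro h1
      apply hg
      rw [eq_inv_of_mul_eq_one_right h1]
      exact E.inv_mem e.2
  simp only [nsmul_eq_mul]
  push_cast
  omega

lemma W_bound (P : Sylow 3 G) {x : G} (hxP : x ∈ P) (hns : ns x = 1)
    {E : Subgroup G} (hE : Nine E) (hxE : x ∈ E) (hEP : E ≤ P) :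
    9 * ∑ g : G, wt g ≤ 2 * (Nat.card G : ℤ) + 7 * Nat.card P + 18 := by
  classical
  have huniq : ∀ R : Sylow 3 G, x ∈ R → R = P := by
    intro R hR
    have : (Finset.univ.filter fun Q : Sylow 3 G => x ∈ Q).card ≤ 1 := hns.le
    rw [Finset.card_le_one] at this
    exact this R (by simpa using hR) P (by simpa using hxP)
  have hS : ∀ g : G, ∑ e : E, wt ((e : G) * g) ≤
      2 + 7 * (if g ∈ P then 1 else 0) + 2 * (if g ∈ E then 1 else 0) := by
    intro g
    by_cases hg : g ∈ P
    · rw [if_pos hg]; have := S_le hE g; omega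
    · have hgE : g ∉ E := fun hh => hg (hEP hh)
      rw [if_neg hg, if_neg hgE]
      by_contra hcon
      obtain ⟨Q, hQ, hEQ, hgQ⟩ := coset hE hgE (by omega)
      obtain ⟨R, hR⟩ := hQ.exists_le_sylow
      have := huniq R (hR (hEQ hxE))
      rw [this] at hR
      exact hg (hR hgQ)
  have h1 : ∑ g : G, ∑ e : E, wt ((e : G) * g) = 9 * ∑ g : G, wt g := by
    rw [Finset.sum_comm]
    have : ∀ e : E, ∑ g : G, wt ((e : G) * g) = ∑ g : G, wt g := fun e =>
      Equiv.sum_comp (Equiv.mulLeft (e : G)) wt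
    simp only [this, Finset.sum_const, Finset.card_univ, nsmul_eq_mul]
    rw [← Nat.card_eq_fintype_card, hE.card]
    rfl
  have hcE : (Finset.univ.filter fun y : G => y ∈ E).card = 9 := by
    rw [← Fintype.card_subtype, ← Nat.card_eq_fintype_card]; exact hE.card
  have hcP : (Finset.univ.filter fun y : G => y ∈ P).card = Nat.card P := by
    rw [← Fintype.card_subtype, ← Nat.card_eq_fintype_card]; rfl
  rw [← h1]
  refine (Finset.sum_le_sum fun g _ => hS g).trans ?_
  rw [Finset.sum_add_distrib, Finset.sum_add_distrib, ← Finset.mul_sum, ← Finset.mul_sum,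
    Finset.sum_boole, Finset.sum_boole, hcE, hcP, Finset.sum_const, Finset.card_univ,
    ← Nat.card_eq_fintype_card, nsmul_eq_mul]
  push_cast
  omega

lemma solv_63 (h : Nat.card G = 63) : Group.IsSolvable G := by
  have : Fact (Nat.Prime 7) := ⟨by norm_num⟩
  obtain ⟨S⟩ : Nonempty (Sylow 7 G) := inferInstance
  have hf : Nat.card (S : Subgroup G) = 7 := by
    have := S.card_eq_multiplicity
    rw [h] at this
    rw [this]
    have : (63 : ℕ) = 7 ^ 1 * 9 := by norm_num
    rw [this, Nat.factorization_mul (by norm_num) (by norm_num), Nat.Prime.factorization_pow (by norm_num)]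
    have : Nat.factorization 9 7 = 0 := Nat.factorization_eq_zero_of_not_dvd (by norm_num)
    simp [this]
  have hi : (S : Subgroup G).index = 9 := by
    have := (S : Subgroup G).card_mul_index
    rw [hf, h] at this
    omega
  have hd := S.card_dvd_index
  have hm := card_sylow_modEq_one 7 G
  rw [hi] at hd
  have hle := Nat.le_of_dvd (by norm_num) hd
  have h1 : Nat.card (Sylow 7 G) = 1 := by
    generalize Nat.card (Sylow 7 G) = c at *
    unfold Nat.ModEq at hm
    interval_cases c <;> simp_all
  have hsub : Subsingleton (Sylow 7 G) := (Nat.card_eq_one_iff_unique.mp h1).1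
  have hN : (S : Subgroup G).Normal := S.normal_of_subsingleton
  have hSs : Group.IsSolvable (S : Subgroup G) := solv_pgroup S.isPGroup'
  have hq : Group.IsSolvable (G ⧸ (S : Subgroup G)) :=
    solv_pgroup (p := 3) (IsPGroup.of_card (n := 2) hi)
  exact solv_ext (S : Subgroup G)

lemma solv_k2 (P : Sylow 3 G) (h9 : 9 ≤ Nat.card P)
    (h : 7 * (Nat.card G : ℤ) < 20 * ∑ g : G, wt g) : Group.IsSolvable G := by
  classical
  obtain ⟨x, hx, hns⟩ := exists_x0 P h9 h
  obtain ⟨Q, hQ⟩ : ∃ Q : Sylow 3 G, x ∈ Q := by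
    have : 0 < (Finset.univ.filter fun Q : Sylow 3 G => x ∈ Q).card := by
      have : (Finset.univ.filter fun Q : Sylow 3 G => x ∈ Q).card = 1 := hns
      omega
    obtain ⟨Q, hQ⟩ := Finset.card_pos.mp this
    exact ⟨Q, by simpa using hQ⟩
  have h9 : 9 ≤ Nat.card Q := by rw [card_Q Q P]; exact h9
  rcases exists_E Q h9 h x hx hQ with hs | ⟨E, hE, hxE, hEQ⟩
  · exact hs
  have hW := W_bound Q hQ hns hE hxE hEQ
  have hcard := (Q : Subgroup G).card_mul_index
  have h0 : (Q : Subgroup G).index ≠ 0 := Subgroup.index_ne_zero_of_finite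
  have h3 : ¬ 3 ∣ (Q : Subgroup G).index := Q.not_dvd_index
  have hQs : Group.IsSolvable (Q : Subgroup G) := solv_pgroup Q.isPGroup'
  obtain ⟨k, hk⟩ := IsPGroup.iff_card.mp Q.isPGroup'
  have hdvd := Q.card_dvd_index
  have hmod := card_sylow_modEq_one 3 G
  set m := (Q : Subgroup G).index with hm
  set q := Nat.card (Q : Subgroup G) with hq
  have hkey : 23 * (q * m) < 140 * q + 360 := by rw [hcard]; omega
  have hm7 : m ≤ 7 := by
    by_contra hcon
    have : q * 8 ≤ q * m := Nat.mul_le_mul_left _ (by omega)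
    omega
  interval_cases m
  · omega
  · exact solv_of_permFin _ hm.symm perm1
  · exact solv_of_permFin _ hm.symm perm2
  · omega
  · exact solv_of_permFin _ hm.symm perm4
  · have h1 : Nat.card (Sylow 3 G) = 1 := by
      rcases (Nat.dvd_prime (by norm_num)).mp hdvd with h1 | h1
      · exact h1
      · rw [h1] at hmod; exact absurd hmod (by decide)
    have hsub : Subsingleton (Sylow 3 G) := (Nat.card_eq_one_iff_unique.mp h1).1
    have hN : (Q : Subgroup G).Normal := Q.normal_of_subsingleton
    have : Fact (Nat.Prime 5) := ⟨by norm_num⟩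
    have hqs : Group.IsSolvable (G ⧸ (Q : Subgroup G)) :=
      solv_pgroup (p := 5) (IsPGroup.of_card (n := 1) hm.symm)
    exact solv_ext (Q : Subgroup G)
  · omega
  · apply solv_63
    have hq17 : q ≤ 17 := by omega
    have hk2 : k < 3 := by
      by_contra hcon
      have := Nat.pow_le_pow_right (n := 3) (by norm_num) (show 3 ≤ k by omega)
      omega
    have hq9 : q = 9 := by interval_cases k <;> omega
    omega

lemma solv_all (h : 7 * (Nat.card G : ℤ) < 20 * ∑ g : G, wt g) : Group.IsSolvable G := by
  obtain ⟨P⟩ : Nonempty (Sylow 3 G) := inferInstance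
  obtain ⟨k, hk⟩ := IsPGroup.iff_card.mp P.isPGroup'
  rcases Nat.lt_or_ge k 2 with hk2 | hk2
  · interval_cases k
    · apply solv_k0 _ h
      have := (P : Subgroup G).card_mul_index
      rw [hk, pow_zero, one_mul] at this
      rw [← this]
      exact P.not_dvd_index
    · exact solv_k1 P hk h
  · apply solv_k2 P _ h
    have h1 := Nat.pow_le_pow_right (n := 3) (by norm_num) hk2
    have : Nat.card P = 3 ^ k := hk
    omega

lemma orderOf_ge (g : G) : (4 : ℤ) - wt g - 2 * (if orderOf g = 2 then 1 else 0) ≤ orderOf g := by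
  have := orderOf_pos g
  unfold wt
  split_ifs <;> omega

lemma main (hns : ¬ Group.IsSolvable G)
    (h : ((Finset.univ.filter fun g : G => orderOf g = 2).card : ℚ) ≤ (Fintype.card G : ℚ) / 20) :
    71 / 20 ≤ (∑ x : G, (orderOf x : ℚ)) / (Fintype.card G : ℚ) := by
  have hW : 20 * ∑ g : G, wt g ≤ 7 * (Nat.card G : ℤ) := by
    by_contra hcon
    exact hns (solv_all (by omega))
  have h1 : (4 : ℤ) * Fintype.card G - ∑ g : G, wt g
      - 2 * (Finset.univ.filter fun g : G => orderOf g = 2).card ≤ ∑ g : G, (orderOf g : ℤ) := by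
    refine le_trans (le_of_eq ?_) (Finset.sum_le_sum fun g _ => orderOf_ge g)
    rw [Finset.sum_sub_distrib, Finset.sum_sub_distrib, ← Finset.mul_sum, Finset.sum_boole]
    simp [mul_comm]
  have hpos : (0 : ℚ) < Fintype.card G := by exact_mod_cast Fintype.card_pos
  rw [le_div_iff₀ hpos]
  rw [Nat.card_eq_fintype_card] at hW
  have hWq : (20 : ℚ) * ((∑ g : G, wt g : ℤ) : ℚ) ≤ 7 * (Fintype.card G : ℚ) := by
    exact_mod_cast hW
  have h1q : (4 : ℚ) * Fintype.card G - ((∑ g : G, wt g : ℤ) : ℚ)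
      - 2 * (Finset.univ.filter fun g : G => orderOf g = 2).card ≤ ∑ g : G, (orderOf g : ℚ) := by
    exact_mod_cast h1
  linarith

end AO

theorem avgOrder_ge_of_few_involutions {G : Type*} [Group G] [Fintype G]
    (hns : ¬ IsSolvable G)
    (h : (numOrderTwo G : ℚ) ≤ (Fintype.card G : ℚ) / 20) :
    71 / 20 ≤ avgOrder G := by
  exact AO.main hns h
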